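/- Weighted power variation, rough regime: Let x be a fractional Brownian motion with Hurst parameter ν ∈ (0,1/4), let (y,y′,y″) be controlled by (x,1−2ν) in L₂ (here ℓ = 3), and let p ≥ 4 be a real number. With c_p = 2^{p/2} Γ((p+1)/2)/√π, the random variables n^{2ν−1} Σ_{k=0}^{n−1} y_{t_k} (|n^ν δx_{t_k t_{k+1}}|^p − c_p) converge in probability, as n → ∞, to (p c_p/8) ∫₀¹ y″_t dt. -/

import Mathlib

/-!
Why the theorem holds. Write `t_k = k/n` and consider, for `i ≤ 2`, the block sums
`F_i(a, N) = ∑_{a ≤ k < a + N} x^i_{t_a t_k} (|n^ν δx_{t_k t_{k+1}}|^p - c_p)`.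

*Block sums.* `F_i(a, N)` lies within `L²`-distance of order `√N (N/n)^{iν}` of
`κ_i n^{-iν} N`, where `κ_0 = κ_1 = 0` and `κ_2 = p c_p / 8`. The constant `κ_2` appears because
for a unit Gaussian `Z` and a Gaussian `ξ` one has
`E[ξ²/2 (|Z|^p - c_p)] = p c_p Cov(ξ, Z)² / 2`, while the covariance of the rescaled increment of
`x` over `[t_a, t_k]` with the next unit increment tends to `-1/2` as `k - a` grows. The second
moment of the centered sum is estimated by pairs: for orthonormal `Z`, `Z'` the Gaussian
integrals are computed exactly, and replacing a unit increment `V` by its innovation with respect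
to an earlier one costs a multiple of their correlation. All covariances are combinations of
terms of the nonincreasing sequence `j ↦ (j+1)^{2ν} - j^{2ν}`, so their sums telescope (`exists_pair_low`,
`exists_pair_two`, `exists_diag`, `exists_block`).

*Sewing.* Expanding `y` around `t_a` to second order leaves the sums of the remainder `r^{(0)}`
against the centered powers. By the Chen relation `RR_add` and the bounds on the block sums they
are almost additive in `L¹`, and the discrete sewing lemma `sewing` bounds them on a block of
length at most `L = 2^j` by a multiple of `n^{-3ν} L^{1+ν}` (`exists_RR`). Here `ν < 1/4` is used
through `L^{2ν} ≤ √L`.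

*Blocks.* Cut `{0, …, n-1}` into blocks of dyadic length `L` of order `n^β` with `4ν < β < 1`.
On each block the sum is approximated by `y''_{t_a} κ_2 n^{-2ν}` times the block length. After
multiplication by `n^{2ν-1}` the total `L¹` error is of order `n^{2ν} L^{-1/2} + (L/n)^ν`
(`exists_total_error`), which tends to zero, and what remains is a Riemann sum of `κ_2 y''`
(`tendsto_riemann`, `tendsto_of_bounded`).

*Localization.* The preceding estimates need `y'` and `y''` bounded in `L²`, which follows from
control once `y'_0` and `y''_0` are square integrable. Multiplying `(y, y', y'')` by the indicator
of `{|y'_0| ≤ M, |y''_0| ≤ M}` preserves control and achieves this (`exists_truncation`); these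
events increase to the whole space, and convergence in probability passes to the limit
(`tendstoInMeasure_of_localization`).
-/

open MeasureTheory ProbabilityTheory Filter
open scoped ENNReal NNReal

noncomputable section

variable {Ω : Type*} [MeasurableSpace Ω]

/-- The smallest point `⌈n s⌉ / n` of the uniform `n`-partition that is `≥ s`. -/
def eps (n : ℕ) (s : ℝ) : ℝ := (⌈(n : ℝ) * s⌉ : ℝ) / n

/-- Discrete integral `J_s^t(f;h)` of a two-parameter process `f` against the
increments `h k = h_{t_k t_{k+1}}` along the uniform `n`-partition. -/
def Jtwo (n : ℕ) (f : ℝ → ℝ → Ω → ℝ) (h : ℕ → Ω → ℝ) (s t : ℝ) (ω : Ω) : ℝ :=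
  ∑ k ∈ Finset.range n,
    if s ≤ (k : ℝ) / n ∧ (k : ℝ) / n < t then f (eps n s) ((k : ℝ) / n) ω * h k ω else 0

/-- Discrete integral `J_s^t(y;h)` of a one-parameter path `y`. -/
def Jone (n : ℕ) (y : ℝ → Ω → ℝ) (h : ℕ → Ω → ℝ) (s t : ℝ) (ω : Ω) : ℝ :=
  ∑ k ∈ Finset.range n,
    if s ≤ (k : ℝ) / n ∧ (k : ℝ) / n < t then (y ((k : ℝ) / n) ω - y (eps n s) ω) * h k ω else 0

/-- A scalar `(L_p, ν, ℓ)`-rough path over the continuous process `X`. -/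
def IsRoughPath (P : Measure Ω) (p : ℝ≥0∞) (ν : ℝ) (ℓ : ℕ) (C : ℝ)
    (X : ℝ → Ω → ℝ) (x : ℕ → ℝ → ℝ → Ω → ℝ) : Prop :=
  (∀ i s t, Measurable (x i s t)) ∧
  (∀ ω, ContinuousOn (fun t => X t ω) (Set.Icc 0 1)) ∧
  (∀ s t ω, x 0 s t ω = 1) ∧
  (∀ s t ω, x 1 s t ω = X t ω - X s ω) ∧
  (∀ k, 1 ≤ k → k ≤ ℓ - 1 → ∀ s u t : ℝ, 0 ≤ s → s ≤ u → u ≤ t → t ≤ 1 → ∀ ω,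
    x k s t ω = ∑ j ∈ Finset.range (k + 1), x (k - j) s u ω * x j u t ω) ∧
  (∀ k, k ≤ ℓ - 1 → ∀ s t : ℝ, 0 ≤ s → s ≤ t → t ≤ 1 →
    eLpNorm (x k s t) p P ≤ ENNReal.ofReal ((C * (t - s) ^ ν) ^ k))

/-- `(y^{(0)},…,y^{(ℓ-1)})` is controlled by the rough path `x` in `L₂`,
with remainder constant `K₀`. -/
def Controlled (P : Measure Ω) (ν : ℝ) (ℓ : ℕ) (K₀ : ℝ)
    (x : ℕ → ℝ → ℝ → Ω → ℝ) (y : ℕ → ℝ → Ω → ℝ) : Prop :=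
  (∀ k, k ≤ ℓ - 1 → ∀ t, Measurable (y k t)) ∧
  (∀ k, k ≤ ℓ - 1 → ∀ ω, ContinuousOn (fun t => y k t ω) (Set.Icc 0 1)) ∧
  (∀ ω, y 0 0 ω = 0) ∧
  (∀ k, k ≤ ℓ - 1 → ∀ s t : ℝ, 0 ≤ s → s ≤ t → t ≤ 1 →
    eLpNorm (fun ω => y k t ω - y k s ω -
        ∑ j ∈ Finset.Icc 1 (ℓ - 1 - k), y (k + j) s ω * x j s t ω) 2 P
      ≤ ENNReal.ofReal (K₀ * (t - s) ^ (((ℓ - k : ℕ) : ℝ) * ν)))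

/-- Covariance of one-dimensional fractional Brownian motion. -/
def fbmCov (ν s t : ℝ) : ℝ := (s ^ (2 * ν) + t ^ (2 * ν) - |t - s| ^ (2 * ν)) / 2

/-- `x` is a fractional Brownian motion with Hurst parameter `ν` on `[0,1]`:
a measurable process with (a.s.) continuous sample paths all of whose finite
linear combinations are centered Gaussian with the fBm covariance. -/
def IsFBM (P : Measure Ω) (ν : ℝ) (x : ℝ → Ω → ℝ) : Prop :=
  (∀ t, Measurable (x t)) ∧
  (∀ᵐ ω ∂P, ContinuousOn (fun t => x t ω) (Set.Icc 0 1)) ∧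
  ∀ (m : ℕ) (t : Fin m → ℝ), (∀ j, t j ∈ Set.Icc (0 : ℝ) 1) →
    ∀ a : Fin m → ℝ,
      P.map (fun ω => ∑ j, a j * x (t j) ω) =
        gaussianReal 0 (∑ j, ∑ k, a j * a k * fbmCov ν (t j) (t k)).toNNReal

/-- Correlation function of the increments of fBm. -/
def rho (ν : ℝ) (k : ℤ) : ℝ :=
  (|(k : ℝ) + 1| ^ (2 * ν) + |(k : ℝ) - 1| ^ (2 * ν) - 2 * |(k : ℝ)| ^ (2 * ν)) / 2

/-- Hermite polynomial `H_q` (probabilists' normalization). -/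
def Hq (q : ℕ) (t : ℝ) : ℝ := Polynomial.aeval t (Polynomial.hermite q)

/-- The increments `h^{n,q}_{t_k t_{k+1}} = H_q(n^ν δx_{t_k t_{k+1}})`. -/
def hermIncr (x : ℝ → Ω → ℝ) (ν : ℝ) (n q : ℕ) (k : ℕ) (ω : Ω) : ℝ :=
  Hq q ((n : ℝ) ^ ν * (x (((k : ℝ) + 1) / n) ω - x ((k : ℝ) / n) ω))

/-- Canonical rough-path lift of a one-dimensional process: `x^i_{st} = (δx_{st})^i / i!`. -/
def xlift (x : ℝ → Ω → ℝ) (i : ℕ) (s t : ℝ) (ω : Ω) : ℝ :=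
  (x t ω - x s ω) ^ i / (Nat.factorial i : ℝ)

/-- Hermite coefficient `a_q = (1/q!) ∫ f H_q dγ` of `f` in `L²(γ)`. -/
def hermCoeff (f : ℝ → ℝ) (q : ℕ) : ℝ :=
  (Nat.factorial q : ℝ)⁻¹ * ∫ t, f t * Hq q t ∂(gaussianReal 0 1)

/-- `c_p = E|N|^p = 2^{p/2} Γ((p+1)/2)/√π`. -/
def cconst (r : ℝ) : ℝ := (2 : ℝ) ^ (r / 2) * Real.Gamma ((r + 1) / 2) / Real.sqrt Real.pi

set_option linter.unusedSectionVars false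

/-! ### Gaussian spaces -/

/-- A (real) Gaussian space: a vector space of random variables all of which are centered
Gaussian. Every finite family of its elements is jointly Gaussian. -/
structure GaussSpace (P : Measure Ω) (H : Submodule ℝ (Ω → ℝ)) : Prop where
  meas : ∀ u ∈ H, Measurable u
  law : ∀ u ∈ H, ∃ v : ℝ≥0, P.map u = gaussianReal 0 v

/-- Random variables with finite moments of all orders. -/
def AllLp (P : Measure Ω) (u : Ω → ℝ) : Prop := ∀ q : ℝ≥0, MemLp u q P

namespace AllLp

variable {P : Measure Ω} {u v : Ω → ℝ}

lemma memLp_two (h : AllLp P u) : MemLp u 2 P := by simpa using h 2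

lemma integrable (h : AllLp P u) : Integrable u P := by
  rw [← memLp_one_iff_integrable]; simpa using h 1

lemma const [IsFiniteMeasure P] (c : ℝ) : AllLp P (fun _ : Ω => c) := fun _ => memLp_const c

lemma add (hu : AllLp P u) (hv : AllLp P v) : AllLp P (fun ω => u ω + v ω) :=
  fun q => (hu q).add (hv q)

lemma sub (hu : AllLp P u) (hv : AllLp P v) : AllLp P (fun ω => u ω - v ω) :=
  fun q => (hu q).sub (hv q)

lemma mul (hu : AllLp P u) (hv : AllLp P v) : AllLp P (fun ω => u ω * v ω) := by
  intro q
  have h1 := hu (2 * q)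
  have h2 := hv (2 * q)
  have : ENNReal.HolderTriple ((2 * q : ℝ≥0) : ℝ≥0∞) ((2 * q : ℝ≥0) : ℝ≥0∞) (q : ℝ≥0∞) := by
    constructor
    push_cast
    rw [ENNReal.mul_inv (by simp) (by simp), ← add_mul, ENNReal.inv_two_add_inv_two, one_mul]
  exact h2.mul (r := (q : ℝ≥0∞)) h1

lemma const_mul (c : ℝ) (hu : AllLp P u) : AllLp P (fun ω => c * u ω) :=
  fun q => (hu q).const_mul c

lemma pow [IsFiniteMeasure P] (hu : AllLp P u) (k : ℕ) : AllLp P (fun ω => u ω ^ k) := by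
  induction k with
  | zero => simpa using const (P := P) 1
  | succ k ih => simpa [pow_succ] using ih.mul hu

lemma abs (hu : AllLp P u) : AllLp P (fun ω => |u ω|) := fun q => (hu q).abs

lemma abs_rpow (hu : AllLp P u) {p : ℝ} (hp : 0 < p) : AllLp P (fun ω => |u ω| ^ p) := by
  intro q
  lift p to ℝ≥0 using hp.le
  have hp' : p ≠ 0 := by rintro rfl; simp at hp
  have h := (hu (q * p)).norm_rpow_div (p : ℝ≥0∞)
  have e : ((q * p : ℝ≥0) : ℝ≥0∞) / p = q := by
    push_cast
    exact ENNReal.mul_div_cancel_right (by simpa using hp') (by simp)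
  rw [e] at h
  simpa using h

end AllLp

namespace GaussSpace

variable {P : Measure Ω} {H : Submodule ℝ (Ω → ℝ)} {u v : Ω → ℝ}

lemma allLp (hH : GaussSpace P H) (hu : u ∈ H) : AllLp P u := by
  intro q
  obtain ⟨v, hv⟩ := hH.law u hu
  have := memLp_id_gaussianReal (μ := 0) (v := v) q
  rw [← hv, memLp_map_measure_iff aestronglyMeasurable_id (hH.meas u hu).aemeasurable] at this
  exact this

lemma integral_eq_zero (hH : GaussSpace P H) (hu : u ∈ H) : ∫ ω, u ω ∂P = 0 := by
  obtain ⟨v, hv⟩ := hH.law u hu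
  have := integral_id_gaussianReal (μ := 0) (v := v)
  rwa [← hv, integral_map (hH.meas u hu).aemeasurable (by fun_prop)] at this

lemma map_eq (hH : GaussSpace P H) (hu : u ∈ H) :
    P.map u = gaussianReal 0 (∫ ω, u ω * u ω ∂P).toNNReal := by
  obtain ⟨v, hv⟩ := hH.law u hu
  have h := variance_fun_id_gaussianReal (μ := 0) (v := v)
  rw [variance_eq_integral (by fun_prop), integral_id_gaussianReal, ← hv,
    integral_map (hH.meas u hu).aemeasurable (by fun_prop)] at h
  have : ∫ ω, u ω * u ω ∂P = v := by rw [← h]; congr 1; ext ω; ring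
  rw [this, hv]; simp

lemma map_eq_std (hH : GaussSpace P H) (hu : u ∈ H) (h1 : ∫ ω, u ω * u ω ∂P = 1) :
    P.map u = gaussianReal 0 1 := by
  rw [hH.map_eq hu, h1]; simp

/-- Elements of a Gaussian space are jointly Gaussian, because each linear functional of the
vector is again an element of the space. -/
lemma hasGaussianLaw (hH : GaussSpace P H) {ι κ : Type*} [Fintype ι] [Fintype κ]
    (U : ι → Ω → ℝ) (V : κ → Ω → ℝ)
    (hU : ∀ i, U i ∈ H) (hV : ∀ i, V i ∈ H) :
    HasGaussianLaw (fun ω => ((fun i => U i ω), (fun i => V i ω))) P := by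
  classical
  have hm : Measurable (fun ω => ((fun i => U i ω), (fun i => V i ω))) :=
    (measurable_pi_iff.2 fun i => hH.meas _ (hU i)).prodMk
      (measurable_pi_iff.2 fun i => hH.meas _ (hV i))
  refine ⟨isGaussian_of_map_eq_gaussianReal fun L => ?_⟩
  rw [Measure.map_map (by fun_prop) hm]
  have : (⇑L ∘ fun ω => ((fun i => U i ω), (fun i => V i ω))) =
      (∑ i, L (Pi.single i 1, 0) • U i) + ∑ i, L (0, Pi.single i 1) • V i := by
    ext ω
    have e : ((fun i => U i ω), (fun i => V i ω)) =
        (∑ i, U i ω • ((Pi.single i (1:ℝ) : ι → ℝ), (0 : κ → ℝ))) +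
        ∑ i, V i ω • ((0 : ι → ℝ), (Pi.single i (1:ℝ) : κ → ℝ)) := by
      ext i
      · simp [Prod.fst_sum, Finset.sum_apply, Pi.single_apply]
      · simp [Prod.snd_sum, Finset.sum_apply, Pi.single_apply]
    simp only [Function.comp]
    rw [e, map_add, map_sum, map_sum]
    simp only [map_smul, smul_eq_mul]
    simp [mul_comm]
  rw [this]
  obtain ⟨v, hv⟩ := hH.law _ (H.add_mem
    (H.sum_mem fun i _ => H.smul_mem (L (Pi.single i 1, 0)) (hU i))
    (H.sum_mem fun i _ => H.smul_mem (L (0, Pi.single i 1)) (hV i)))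
  exact ⟨0, v, hv⟩

variable [IsProbabilityMeasure P]

/-- In a Gaussian space orthogonality implies independence. -/
lemma indepFun (hH : GaussSpace P H) {κ : Type*} [Fintype κ] (V : κ → Ω → ℝ)
    (hu : u ∈ H) (hV : ∀ i, V i ∈ H) (h : ∀ i, ∫ ω, u ω * V i ω ∂P = 0) :
    IndepFun u (fun ω i => V i ω) P := by
  have := (hH.hasGaussianLaw (fun _ : Unit => u) V (fun _ => hu) hV).indepFun_of_covariance_eval
    (X := fun _ : Unit => u) (Y := V) (fun _ j => by
      rw [covariance_eq_sub (hH.allLp hu).memLp_two (hH.allLp (hV j)).memLp_two,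
        hH.integral_eq_zero hu]
      simpa using h j)
  exact this.comp (φ := fun f : Unit → ℝ => f ()) (ψ := id) (by fun_prop) measurable_id

/-- Expectations factorize over an element of a Gaussian space and functions of elements that
are orthogonal to it. -/
lemma integral_mul_of_orth (hH : GaussSpace P H) {κ : Type*} [Fintype κ] (V : κ → Ω → ℝ)
    (hu : u ∈ H) (hV : ∀ i, V i ∈ H) (h : ∀ i, ∫ ω, u ω * V i ω ∂P = 0)
    {g : ℝ → ℝ} (hg : Measurable g) {k : (κ → ℝ) → ℝ} (hk : Measurable k) :
    ∫ ω, g (u ω) * k (fun i => V i ω) ∂P =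
      (∫ ω, g (u ω) ∂P) * ∫ ω, k (fun i => V i ω) ∂P := by
  have hi := (hH.indepFun V hu hV h).comp hg hk
  exact hi.integral_fun_mul_eq_mul_integral
    (hg.comp (hH.meas u hu)).aestronglyMeasurable
    (hk.comp (measurable_pi_iff.2 fun i => hH.meas _ (hV i))).aestronglyMeasurable

end GaussSpace

/-! ### Centered powers and Gaussian moments -/

/-- The centered power function `z ↦ |z| ^ p - c_p`. -/
def fpow (p z : ℝ) : ℝ := |z| ^ p - cconst p

lemma measurable_fpow (p : ℝ) : Measurable (fpow p) := by unfold fpow; fun_prop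

lemma fpow_neg (p z : ℝ) : fpow p (-z) = fpow p z := by simp [fpow]

lemma integral_abs_rpow_gaussian {q : ℝ} (hq : -1 < q) :
    ∫ z, |z| ^ q ∂(gaussianReal 0 1) = cconst q := by
  rw [integral_gaussianReal_eq_integral_smul one_ne_zero]
  have h1 : ∀ z : ℝ, gaussianPDFReal 0 1 z • |z| ^ q =
      (fun y : ℝ => (√(2 * Real.pi))⁻¹ * (y ^ q * Real.exp (-(1 / 2) * y ^ (2 : ℝ)))) |z| := by
    intro z
    simp only [gaussianPDFReal, smul_eq_mul]
    have : -(1 / 2 : ℝ) * |z| ^ (2 : ℝ) = -(z - 0) ^ 2 / (2 * (1 : ℝ≥0)) := by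
      rw [Real.rpow_two, sq_abs]; push_cast; ring
    rw [this]; push_cast; ring_nf
  simp_rw [h1]
  rw [integral_comp_abs (f := fun y : ℝ =>
    (√(2 * Real.pi))⁻¹ * (y ^ q * Real.exp (-(1 / 2) * y ^ (2 : ℝ)))), integral_const_mul,
    integral_rpow_mul_exp_neg_mul_rpow (by norm_num) hq (by norm_num)]
  unfold cconst
  have e1 : (1 / 2 : ℝ) ^ (-(q + 1) / 2) = 2 ^ (q / 2) * √2 := by
    rw [one_div, Real.inv_rpow (by norm_num), ← Real.rpow_neg (by norm_num), Real.sqrt_eq_rpow,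
      ← Real.rpow_add (by norm_num)]
    congr 1; ring
  rw [e1, Real.sqrt_mul (by norm_num)]
  have : √2 ≠ 0 := by positivity
  have : √Real.pi ≠ 0 := by positivity
  field_simp

lemma cconst_zero : cconst 0 = 1 := by
  simp only [cconst]
  have h1 : Real.Gamma ((0 + 1) / 2) = √Real.pi := by
    rw [zero_add]; exact Real.Gamma_one_half_eq
  have h2 : √Real.pi ≠ 0 := by positivity
  rw [h1]; field_simp; simp

lemma cconst_add_two {p : ℝ} (hp : -1 < p) : cconst (p + 2) = (p + 1) * cconst p := by
  unfold cconst
  have : (p + 2 + 1) / 2 = (p + 1) / 2 + 1 := by ring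
  rw [this, Real.Gamma_add_one (by linarith), show (p + 2) / 2 = p / 2 + 1 by ring,
    Real.rpow_add (by norm_num), Real.rpow_one]
  ring

lemma cconst_two : cconst 2 = 1 := by
  have := cconst_add_two (p := 0) (by norm_num)
  simpa [cconst_zero] using this

lemma cconst_nonneg {p : ℝ} (hp : -1 < p) : 0 ≤ cconst p := by
  unfold cconst
  have := Real.Gamma_pos_of_pos (s := (p + 1) / 2) (by linarith)
  positivity

lemma integral_odd_gaussian {g : ℝ → ℝ} (hm : Measurable g) (hg : ∀ z, g (-z) = -g z) :
    ∫ z, g z ∂(gaussianReal 0 1) = 0 := by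
  have h := gaussianReal_map_neg (μ := 0) (v := 1)
  have : ∫ z, g z ∂(gaussianReal 0 1) = ∫ z, g (-z) ∂(gaussianReal 0 1) := by
    rw [← integral_map (φ := fun z : ℝ => -z) (by fun_prop) hm.aestronglyMeasurable, h, neg_zero]
  simp only [hg, integral_neg] at this
  linarith

lemma allLp_fpow {P : Measure Ω} [IsFiniteMeasure P] {u : Ω → ℝ} (hu : AllLp P u) {p : ℝ}
    (hp : 0 < p) : AllLp P (fun ω => fpow p (u ω)) :=
  (hu.abs_rpow hp).sub (AllLp.const _)

namespace GaussSpace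

variable {P : Measure Ω} [IsProbabilityMeasure P] {H : Submodule ℝ (Ω → ℝ)} {Z : Ω → ℝ} {p : ℝ}

lemma integral_comp_std (hH : GaussSpace P H) (hZ : Z ∈ H) (h1 : ∫ ω, Z ω * Z ω ∂P = 1)
    {g : ℝ → ℝ} (hg : Measurable g) :
    ∫ ω, g (Z ω) ∂P = ∫ z, g z ∂(gaussianReal 0 1) := by
  rw [← hH.map_eq_std hZ h1, integral_map (hH.meas _ hZ).aemeasurable hg.aestronglyMeasurable]

lemma integral_abs_rpow (hH : GaussSpace P H) (hZ : Z ∈ H) (h1 : ∫ ω, Z ω * Z ω ∂P = 1)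
    {q : ℝ} (hq : -1 < q) : ∫ ω, |Z ω| ^ q ∂P = cconst q := by
  rw [hH.integral_comp_std hZ h1 (g := fun z => |z| ^ q) (by fun_prop),
    integral_abs_rpow_gaussian hq]

lemma moment_zero (hH : GaussSpace P H) (hZ : Z ∈ H) (h1 : ∫ ω, Z ω * Z ω ∂P = 1)
    (hp : 0 < p) : ∫ ω, fpow p (Z ω) ∂P = 0 := by
  unfold fpow
  rw [integral_sub ((hH.allLp hZ).abs_rpow hp).integrable (integrable_const _),
    hH.integral_abs_rpow hZ h1 (by linarith)]
  simp

lemma moment_odd (hH : GaussSpace P H) (hZ : Z ∈ H) (h1 : ∫ ω, Z ω * Z ω ∂P = 1)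
    {j : ℕ} (hj : Odd j) : ∫ ω, Z ω ^ j * fpow p (Z ω) ∂P = 0 := by
  have hm : Measurable (fun z => z ^ j * fpow p z) := by
    have := measurable_fpow p
    fun_prop
  rw [hH.integral_comp_std hZ h1 (g := fun z => z ^ j * fpow p z) hm]
  refine integral_odd_gaussian hm fun z => ?_
  rw [fpow_neg, hj.neg_pow]; ring

/-- The second Hermite coefficient: `E[Z² (|Z|^p - c_p)] = c_{p+2} - c_p = p c_p`. -/
lemma moment_two (hH : GaussSpace P H) (hZ : Z ∈ H) (h1 : ∫ ω, Z ω * Z ω ∂P = 1)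
    (hp : 0 < p) : ∫ ω, Z ω ^ 2 * fpow p (Z ω) ∂P = p * cconst p := by
  have e : ∀ ω, Z ω ^ 2 * fpow p (Z ω) = |Z ω| ^ (p + 2) - cconst p * (Z ω * Z ω) := by
    intro ω
    rw [fpow, Real.rpow_add' (abs_nonneg _) (by linarith), Real.rpow_two, sq_abs]
    ring
  simp_rw [e]
  rw [integral_sub ((hH.allLp hZ).abs_rpow (by linarith)).integrable
    (((hH.allLp hZ).mul (hH.allLp hZ)).const_mul _).integrable, integral_const_mul, h1,
    hH.integral_abs_rpow hZ h1 (by linarith), cconst_add_two (by linarith)]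
  ring

end GaussSpace

/-! ### Exact Gaussian integrals -/

namespace GaussSpace

variable {P : Measure Ω} [IsProbabilityMeasure P] {H : Submodule ℝ (Ω → ℝ)}
  {u v ξ η Z Z' : Ω → ℝ} {p : ℝ}

lemma ip_integrable (hH : GaussSpace P H) (hu : u ∈ H) (hv : v ∈ H) :
    Integrable (fun ω => u ω * v ω) P := ((hH.allLp hu).mul (hH.allLp hv)).integrable

lemma sub_smul_mem (hu : u ∈ H) (hv : v ∈ H) (c : ℝ) : (fun ω => u ω - c * v ω) ∈ H :=
  H.sub_mem hu (H.smul_mem c hv)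

lemma ip_sub_smul (hH : GaussSpace P H) (hu : u ∈ H) (hZ : Z ∈ H) (hv : v ∈ H) (c : ℝ) :
    ∫ ω, v ω * (u ω - c * Z ω) ∂P = ∫ ω, u ω * v ω ∂P - c * ∫ ω, v ω * Z ω ∂P := by
  rw [← integral_const_mul, ← integral_sub (hH.ip_integrable hu hv)
    ((hH.ip_integrable hv hZ).const_mul c)]
  congr 1; ext ω; ring

/-- Quadratic weights see only the second Hermite coefficient of the power function. -/
lemma integral_mul_mul_fpow (hH : GaussSpace P H) (hp : 0 < p) (hu : u ∈ H) (hv : v ∈ H)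
    (hZ : Z ∈ H) (h1 : ∫ ω, Z ω * Z ω ∂P = 1) :
    ∫ ω, u ω * v ω * fpow p (Z ω) ∂P =
      (∫ ω, u ω * Z ω ∂P) * (∫ ω, v ω * Z ω ∂P) * (p * cconst p) := by
  set c := ∫ ω, u ω * Z ω ∂P with hc
  set e := ∫ ω, v ω * Z ω ∂P with he
  -- `a` and `b` are the components of `u` and `v` orthogonal to `Z`, hence independent of `Z`
  set a : Ω → ℝ := fun ω => u ω - c * Z ω with ha
  set b : Ω → ℝ := fun ω => v ω - e * Z ω with hb
  have haH : a ∈ H := sub_smul_mem hu hZ c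
  have hbH : b ∈ H := sub_smul_mem hv hZ e
  have oa : ∫ ω, Z ω * a ω ∂P = 0 := by
    rw [ha, hH.ip_sub_smul hu hZ hZ, h1, ← hc]; ring
  have ob : ∫ ω, Z ω * b ω ∂P = 0 := by
    rw [hb, hH.ip_sub_smul hv hZ hZ, h1, ← he]; ring
  have hf := measurable_fpow p
  have lZ := hH.allLp hZ
  have lf := allLp_fpow lZ hp
  have la := hH.allLp haH
  have lb := hH.allLp hbH
  have key : ∀ (j : ℕ) (k : (Fin 2 → ℝ) → ℝ), Measurable k →
      ∫ ω, (Z ω ^ j * fpow p (Z ω)) * k (fun i => ![a, b] i ω) ∂P =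
      (∫ ω, Z ω ^ j * fpow p (Z ω) ∂P) * ∫ ω, k (fun i => ![a, b] i ω) ∂P := by
    intro j k hk
    exact hH.integral_mul_of_orth ![a, b] hZ (by simp [Fin.forall_fin_two, haH, hbH])
      (by simp [Fin.forall_fin_two, oa, ob]) (g := fun z => z ^ j * fpow p z) (by fun_prop) hk
  have k0 := key 0 (fun x => x 0 * x 1) (by fun_prop)
  have k1 := key 1 (fun x => c * x 1 + e * x 0) (by fun_prop)
  have k2 := hH.moment_two hZ h1 hp
  simp only [pow_zero, one_mul] at k0
  rw [hH.moment_zero hZ h1 hp, zero_mul] at k0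
  rw [hH.moment_odd hZ h1 odd_one, zero_mul] at k1
  simp only [Matrix.cons_val_zero, Matrix.cons_val_one] at k0 k1
  have e1 : ∀ ω, u ω * v ω * fpow p (Z ω) = (c * e) * (Z ω ^ 2 * fpow p (Z ω)) +
      ((Z ω ^ 1 * fpow p (Z ω)) * (c * b ω + e * a ω) + fpow p (Z ω) * (a ω * b ω)) := by
    intro ω; simp only [ha, hb]; ring
  simp_rw [e1]
  have i1 := (((lZ.pow 1).mul lf).mul ((lb.const_mul c).add (la.const_mul e)))
  have i2 := lf.mul (la.mul lb)
  rw [integral_add (((lZ.pow 2).mul lf).const_mul (c * e)).integrable (i1.add i2).integrable,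
    integral_add i1.integrable i2.integrable, integral_const_mul, k0, k1, k2]
  ring

/-- The weighted second moment for an orthonormal pair: only the monomials that are quadratic
in both `Z` and `Z'` contribute. -/
lemma integral_sq_mul_sq (hH : GaussSpace P H) (hp : 0 < p) (hξ : ξ ∈ H) (hη : η ∈ H)
    (hZ : Z ∈ H) (hZ' : Z' ∈ H) (h1 : ∫ ω, Z ω * Z ω ∂P = 1) (h1' : ∫ ω, Z' ω * Z' ω ∂P = 1)
    (h0 : ∫ ω, Z ω * Z' ω ∂P = 0) {c d e e' : ℝ}
    (hc : ∫ ω, ξ ω * Z ω ∂P = c) (hd : ∫ ω, ξ ω * Z' ω ∂P = d)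
    (he : ∫ ω, η ω * Z ω ∂P = e) (he' : ∫ ω, η ω * Z' ω ∂P = e') :
    ∫ ω, (ξ ω ^ 2 * η ω ^ 2) * (fpow p (Z ω) * fpow p (Z' ω)) ∂P =
      (p * cconst p) ^ 2 * (c ^ 2 * e' ^ 2 + 4 * c * d * e * e' + d ^ 2 * e ^ 2) := by
  set a : Ω → ℝ := fun ω => ξ ω - c * Z ω with ha
  set b : Ω → ℝ := fun ω => η ω - e * Z ω with hb
  have haH : a ∈ H := sub_smul_mem hξ hZ c
  have hbH : b ∈ H := sub_smul_mem hη hZ e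
  have oa : ∫ ω, Z ω * a ω ∂P = 0 := by
    rw [ha, hH.ip_sub_smul hξ hZ hZ, h1, hc]; ring
  have ob : ∫ ω, Z ω * b ω ∂P = 0 := by
    rw [hb, hH.ip_sub_smul hη hZ hZ, h1, he]; ring
  have h0' : ∫ ω, Z' ω * Z ω ∂P = 0 := by rw [← h0]; congr 1; ext ω; ring
  have ad : ∫ ω, a ω * Z' ω ∂P = d := by
    have := hH.ip_sub_smul hξ hZ hZ' c
    rw [hd, h0', mul_zero, sub_zero] at this
    rw [← this]; congr 1; ext ω; ring
  have be : ∫ ω, b ω * Z' ω ∂P = e' := by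
    have := hH.ip_sub_smul hη hZ hZ' e
    rw [he', h0', mul_zero, sub_zero] at this
    rw [← this]; congr 1; ext ω; ring
  have hf := measurable_fpow p
  have lZ := hH.allLp hZ
  have lf := allLp_fpow lZ hp
  have lf' := allLp_fpow (hH.allLp hZ') hp
  have la := hH.allLp haH
  have lb := hH.allLp hbH
  have key : ∀ (j : ℕ) (k : (Fin 3 → ℝ) → ℝ), Measurable k →
      ∫ ω, (Z ω ^ j * fpow p (Z ω)) * k (fun i => ![a, b, Z'] i ω) ∂P =
      (∫ ω, Z ω ^ j * fpow p (Z ω) ∂P) * ∫ ω, k (fun i => ![a, b, Z'] i ω) ∂P := by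
    intro j k hk
    exact hH.integral_mul_of_orth ![a, b, Z'] hZ (by simp [Fin.forall_fin_succ, haH, hbH, hZ'])
      (by simp [Fin.forall_fin_succ, oa, ob, h0]) (g := fun z => z ^ j * fpow p z)
      (by fun_prop) hk
  have k0 := key 0 (fun x => (x 0 ^ 2 * x 1 ^ 2) * fpow p (x 2)) (by fun_prop)
  have k1 := key 1 (fun x => (2 * c * x 0 * x 1 ^ 2 + 2 * e * x 0 ^ 2 * x 1) * fpow p (x 2))
    (by fun_prop)
  have k2 := key 2 (fun x => (c ^ 2 * (x 1 * x 1) + 4 * c * e * (x 0 * x 1) +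
    e ^ 2 * (x 0 * x 0)) * fpow p (x 2)) (by fun_prop)
  have k3 := key 3 (fun x => (2 * c ^ 2 * e * x 1 + 2 * c * e ^ 2 * x 0) * fpow p (x 2))
    (by fun_prop)
  have k4 := key 4 (fun x => (c ^ 2 * e ^ 2) * fpow p (x 2)) (by fun_prop)
  rw [hH.moment_two hZ h1 hp] at k2
  rw [hH.moment_odd hZ h1 odd_one, zero_mul] at k1
  rw [hH.moment_odd hZ h1 (by decide), zero_mul] at k3
  simp only [pow_zero, one_mul] at k0
  rw [hH.moment_zero hZ h1 hp, zero_mul] at k0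
  have e2 : ∀ (i : Fin 3) ω, ![a, b, Z'] i ω = ![a ω, b ω, Z' ω] i := by
    simp [Fin.forall_fin_succ]
  simp only [e2, Matrix.cons_val_zero, Matrix.cons_val_one, Matrix.cons_val] at k0 k1 k2 k3 k4
  rw [integral_const_mul, hH.moment_zero hZ' h1' hp, mul_zero, mul_zero] at k4
  have q1 : ∫ ω, (c ^ 2 * (b ω * b ω) + 4 * c * e * (a ω * b ω) +
      e ^ 2 * (a ω * a ω)) * fpow p (Z' ω) ∂P =
      (c ^ 2 * (e' * e') + 4 * c * e * (d * e') + e ^ 2 * (d * d)) * (p * cconst p) := by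
    have r1 := hH.integral_mul_mul_fpow hp hbH hbH hZ' h1'
    have r2 := hH.integral_mul_mul_fpow hp haH hbH hZ' h1'
    have r3 := hH.integral_mul_mul_fpow hp haH haH hZ' h1'
    rw [be] at r1 r2
    rw [ad] at r2 r3
    have : ∀ ω, (c ^ 2 * (b ω * b ω) + 4 * c * e * (a ω * b ω) +
      e ^ 2 * (a ω * a ω)) * fpow p (Z' ω) = c ^ 2 * (b ω * b ω * fpow p (Z' ω)) +
      (4 * c * e * (a ω * b ω * fpow p (Z' ω)) + e ^ 2 * (a ω * a ω * fpow p (Z' ω))) := by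
      intro ω; ring
    simp_rw [this]
    have i1 := ((lb.mul lb).mul lf').const_mul (c ^ 2)
    have i2 := ((la.mul lb).mul lf').const_mul (4 * c * e)
    have i3 := ((la.mul la).mul lf').const_mul (e ^ 2)
    rw [integral_add i1.integrable (i2.add i3).integrable,
      integral_add i2.integrable i3.integrable, integral_const_mul, integral_const_mul,
      integral_const_mul, r1, r2, r3]
    ring
  have e1 : ∀ ω, (ξ ω ^ 2 * η ω ^ 2) * (fpow p (Z ω) * fpow p (Z' ω)) =
      fpow p (Z ω) * ((a ω ^ 2 * b ω ^ 2) * fpow p (Z' ω)) +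
      (Z ω ^ 1 * fpow p (Z ω) * ((2 * c * a ω * b ω ^ 2 + 2 * e * a ω ^ 2 * b ω) *
        fpow p (Z' ω)) +
      (Z ω ^ 2 * fpow p (Z ω) * ((c ^ 2 * (b ω * b ω) + 4 * c * e * (a ω * b ω) +
        e ^ 2 * (a ω * a ω)) * fpow p (Z' ω)) +
      (Z ω ^ 3 * fpow p (Z ω) * ((2 * c ^ 2 * e * b ω + 2 * c * e ^ 2 * a ω) *
        fpow p (Z' ω)) +
      Z ω ^ 4 * fpow p (Z ω) * (c ^ 2 * e ^ 2 * fpow p (Z' ω))))) := by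
    intro ω; simp only [ha, hb]; ring
  simp_rw [e1]
  have i0 := lf.mul (((la.pow 2).mul (lb.pow 2)).mul lf')
  have i1 := ((lZ.pow 1).mul lf).mul (((((la.const_mul (2 * c)).mul (lb.pow 2))).add
    ((((la.pow 2).const_mul (2 * e)).mul lb))).mul lf')
  have i2 := ((lZ.pow 2).mul lf).mul (((((lb.mul lb).const_mul (c ^ 2)).add
    ((la.mul lb).const_mul (4 * c * e))).add ((la.mul la).const_mul (e ^ 2))).mul lf')
  have i3 := ((lZ.pow 3).mul lf).mul (((lb.const_mul (2 * c ^ 2 * e)).add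
    (la.const_mul (2 * c * e ^ 2))).mul lf')
  have i4 := ((lZ.pow 4).mul lf).mul (lf'.const_mul (c ^ 2 * e ^ 2))
  rw [integral_add i0.integrable (i1.add (i2.add (i3.add i4))).integrable,
    integral_add i1.integrable (i2.add (i3.add i4)).integrable,
    integral_add i2.integrable (i3.add i4).integrable,
    integral_add i3.integrable i4.integrable, k0, k1, k2, k3, k4, q1]
  ring

/-- Linear weights contribute nothing for an orthonormal pair: after splitting off the components of
`ξ` and `η` along `Z`, every term contains the mean of an odd or of a centered function of `Z`, or
the mean of the second centered power. -/
lemma integral_mul_one (hH : GaussSpace P H) (hp : 0 < p) (hξ : ξ ∈ H) (hη : η ∈ H)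
    (hZ : Z ∈ H) (hZ' : Z' ∈ H) (h1 : ∫ ω, Z ω * Z ω ∂P = 1) (h1' : ∫ ω, Z' ω * Z' ω ∂P = 1)
    (h0 : ∫ ω, Z ω * Z' ω ∂P = 0) :
    ∫ ω, (ξ ω * η ω) * (fpow p (Z ω) * fpow p (Z' ω)) ∂P = 0 := by
  set c := ∫ ω, ξ ω * Z ω ∂P with hc
  set e := ∫ ω, η ω * Z ω ∂P with he
  set a : Ω → ℝ := fun ω => ξ ω - c * Z ω with ha
  set b : Ω → ℝ := fun ω => η ω - e * Z ω with hb
  have haH : a ∈ H := sub_smul_mem hξ hZ c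
  have hbH : b ∈ H := sub_smul_mem hη hZ e
  have oa : ∫ ω, Z ω * a ω ∂P = 0 := by
    rw [ha, hH.ip_sub_smul hξ hZ hZ, h1, hc]; ring
  have ob : ∫ ω, Z ω * b ω ∂P = 0 := by
    rw [hb, hH.ip_sub_smul hη hZ hZ, h1, he]; ring
  have hf := measurable_fpow p
  have lZ := hH.allLp hZ
  have lf := allLp_fpow lZ hp
  have lf' := allLp_fpow (hH.allLp hZ') hp
  have la := hH.allLp haH
  have lb := hH.allLp hbH
  have key : ∀ (j : ℕ) (k : (Fin 3 → ℝ) → ℝ), Measurable k →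
      ∫ ω, (Z ω ^ j * fpow p (Z ω)) * k (fun i => ![a, b, Z'] i ω) ∂P =
      (∫ ω, Z ω ^ j * fpow p (Z ω) ∂P) * ∫ ω, k (fun i => ![a, b, Z'] i ω) ∂P := by
    intro j k hk
    exact hH.integral_mul_of_orth ![a, b, Z'] hZ (by simp [Fin.forall_fin_succ, haH, hbH, hZ'])
      (by simp [Fin.forall_fin_succ, oa, ob, h0]) (g := fun z => z ^ j * fpow p z)
      (by fun_prop) hk
  have k0 := key 0 (fun x => (x 0 * x 1) * fpow p (x 2)) (by fun_prop)
  have k1 := key 1 (fun x => (c * x 1 + e * x 0) * fpow p (x 2)) (by fun_prop)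
  have k2 := key 2 (fun x => (c * e) * fpow p (x 2)) (by fun_prop)
  rw [hH.moment_odd hZ h1 odd_one, zero_mul] at k1
  simp only [pow_zero, one_mul] at k0
  rw [hH.moment_zero hZ h1 hp, zero_mul] at k0
  have e2 : ∀ (i : Fin 3) ω, ![a, b, Z'] i ω = ![a ω, b ω, Z' ω] i := by
    simp [Fin.forall_fin_succ]
  simp only [e2, Matrix.cons_val_zero, Matrix.cons_val_one, Matrix.cons_val] at k0 k1 k2
  rw [integral_const_mul, hH.moment_zero hZ' h1' hp, mul_zero, mul_zero] at k2
  have e1 : ∀ ω, (ξ ω * η ω) * (fpow p (Z ω) * fpow p (Z' ω)) =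
      fpow p (Z ω) * ((a ω * b ω) * fpow p (Z' ω)) +
      (Z ω ^ 1 * fpow p (Z ω) * ((c * b ω + e * a ω) * fpow p (Z' ω)) +
      (Z ω ^ 2 * fpow p (Z ω) * (c * e * fpow p (Z' ω)))) := by
    intro ω; simp only [ha, hb]; ring
  simp_rw [e1]
  have i0 := lf.mul ((la.mul lb).mul lf')
  have i1 := ((lZ.pow 1).mul lf).mul (((lb.const_mul c).add (la.const_mul e)).mul lf')
  have i2 := ((lZ.pow 2).mul lf).mul (lf'.const_mul (c * e))
  rw [integral_add i0.integrable (i1.add i2).integrable,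
    integral_add i1.integrable i2.integrable, k0, k1, k2]
  ring

/-- Orthogonal Gaussian variables are independent, so their centered powers are uncorrelated. -/
lemma integral_fpow_mul_fpow (hH : GaussSpace P H) (hp : 0 < p)
    (hZ : Z ∈ H) (hZ' : Z' ∈ H) (h1 : ∫ ω, Z ω * Z ω ∂P = 1)
    (h0 : ∫ ω, Z ω * Z' ω ∂P = 0) :
    ∫ ω, fpow p (Z ω) * fpow p (Z' ω) ∂P = 0 := by
  have hf := measurable_fpow p
  have := hH.integral_mul_of_orth (fun _ : Unit => Z') hZ (fun _ => hZ') (fun _ => h0)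
    (g := fpow p) hf (k := fun x => fpow p (x ())) (by fun_prop)
  rw [this, hH.moment_zero hZ h1 hp, zero_mul]

end GaussSpace

/-! ### Replacing an increment by its innovation -/

/-- The power function is Lipschitz on bounded sets. -/
lemma abs_rpow_sub_le {p a b M : ℝ} (hp : 1 ≤ p) (ha : 0 ≤ a) (hb : 0 ≤ b)
    (haM : a ≤ M) (hbM : b ≤ M) : |a ^ p - b ^ p| ≤ p * M ^ (p - 1) * |a - b| := by
  have key : ∀ a b : ℝ, 0 ≤ a → a ≤ b → b ≤ M → b ^ p - a ^ p ≤ p * M ^ (p - 1) * (b - a) := by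
    intro a b ha hab hbM
    rcases eq_or_lt_of_le (ha.trans hab) with h0 | hb0
    · have : a = 0 := le_antisymm (h0 ▸ hab) ha
      rw [← h0, this]; simp
    have h := one_add_mul_self_le_rpow_one_add (s := a / b - 1) (p := p)
      (by have := div_nonneg ha hb0.le; linarith) hp
    rw [show 1 + (a / b - 1) = a / b by ring, Real.div_rpow ha hb0.le,
      le_div_iff₀ (Real.rpow_pos_of_pos hb0 p)] at h
    have e : b ^ p = b ^ (p - 1) * b := by
      rw [Real.rpow_sub_one hb0.ne']; field_simp
    have h2 : b ^ (p - 1) ≤ M ^ (p - 1) := Real.rpow_le_rpow hb0.le hbM (by linarith)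
    have h3 : b ^ p - a ^ p ≤ p * b ^ (p - 1) * (b - a) := by
      have : (1 + p * (a / b - 1)) * b ^ p = b ^ p - p * b ^ (p - 1) * (b - a) := by
        rw [e]; field_simp; ring
      linarith
    refine h3.trans ?_
    gcongr
  rcases le_total a b with h | h
  · rw [abs_sub_comm, abs_sub_comm a b, abs_of_nonneg (sub_nonneg.2 h), abs_of_nonneg]
    · exact key a b ha h hbM
    · exact sub_nonneg.2 (Real.rpow_le_rpow ha h (by linarith))
  · rw [abs_of_nonneg (sub_nonneg.2 h), abs_of_nonneg]
    · exact key b a hb h haM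
    · exact sub_nonneg.2 (Real.rpow_le_rpow hb h (by linarith))

lemma add_five_pow_le {a b c d : ℝ} (ha : 0 ≤ a) (hb : 0 ≤ b) (hc : 0 ≤ c) (hd : 0 ≤ d)
    (m : ℕ) : (1 + a + b + c + d) ^ m ≤ 5 ^ m * (1 + a ^ m + b ^ m + c ^ m + d ^ m) := by
  set M := max 1 (max (max a b) (max c d)) with hM
  have h1 : (1 + a + b + c + d) ≤ 5 * M := by
    have h0 : 1 ≤ M := le_max_left _ _
    have h2 : a ≤ M := by simp [hM]
    have h3 : b ≤ M := by simp [hM]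
    have h4 : c ≤ M := by simp [hM]
    have h5 : d ≤ M := by simp [hM]
    linarith
  have h2 : M ^ m ≤ 1 + a ^ m + b ^ m + c ^ m + d ^ m := by
    have p1 := pow_nonneg ha m
    have p2 := pow_nonneg hb m
    have p3 := pow_nonneg hc m
    have p4 := pow_nonneg hd m
    have : M = 1 ∨ M = a ∨ M = b ∨ M = c ∨ M = d := by
      rcases max_choice 1 (max (max a b) (max c d)) with h | h
      · exact Or.inl h
      rw [hM, h]
      rcases max_choice (max a b) (max c d) with h' | h' <;> rw [h']
      · rcases max_choice a b with h'' | h'' <;> rw [h''] <;> simp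
      · rcases max_choice c d with h'' | h'' <;> rw [h''] <;> simp
    rcases this with h | h | h | h | h <;> rw [h]
    · simp; linarith
    all_goals linarith
  calc _ ≤ (5 * M) ^ m := by gcongr
    _ = 5 ^ m * M ^ m := mul_pow _ _ _
    _ ≤ _ := by gcongr

namespace GaussSpace

variable {P : Measure Ω} [IsProbabilityMeasure P] {H : Submodule ℝ (Ω → ℝ)}
  {u v ξ η Z V : Ω → ℝ} {p : ℝ}

lemma integral_abs_pow_le (hH : GaussSpace P H) (hu : u ∈ H) (h1 : ∫ ω, u ω * u ω ∂P ≤ 1)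
    (m : ℕ) : ∫ ω, |u ω| ^ m ∂P ≤ cconst m := by
  set w := ∫ ω, u ω * u ω ∂P with hw
  have hw0 : 0 ≤ w := integral_nonneg fun ω => mul_self_nonneg _
  have h := gaussianReal_map_const_mul (μ := 0) (v := 1) (√w)
  have e : P.map u = (gaussianReal 0 1).map (fun z => √w * z) := by
    rw [h, hH.map_eq hu, ← hw]
    congr 1
    · simp
    · ext; simp [hw0]
  have e2 : ∫ ω, |u ω| ^ m ∂P = ∫ z, |√w * z| ^ m ∂(gaussianReal 0 1) := by
    rw [← integral_map (φ := u) (f := fun z => |z| ^ m) (hH.meas _ hu).aemeasurable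
      (by fun_prop), e, integral_map (by fun_prop) (by fun_prop)]
  have hm : (-1 : ℝ) < m := by have : (0 : ℝ) ≤ m := m.cast_nonneg; linarith
  rw [e2, ← integral_abs_rpow_gaussian hm]
  simp_rw [Real.rpow_natCast, abs_mul, mul_pow]
  rw [integral_const_mul]
  have : |√w| ^ m ≤ 1 := pow_le_one₀ (abs_nonneg _) (by
    rw [abs_of_nonneg (Real.sqrt_nonneg _)]; exact Real.sqrt_le_one.2 h1)
  exact mul_le_of_le_one_left (integral_nonneg fun z => by positivity) this

/-- Uniform moment bound for the polynomial envelope of all the integrands below. -/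
lemma integral_env_le (hH : GaussSpace P H) (hξ : ξ ∈ H) (hη : η ∈ H) (hZ : Z ∈ H)
    (hV : V ∈ H) (h1 : ∫ ω, ξ ω * ξ ω ∂P ≤ 1) (h2 : ∫ ω, η ω * η ω ∂P ≤ 1)
    (h3 : ∫ ω, Z ω * Z ω ∂P ≤ 1) (h4 : ∫ ω, V ω * V ω ∂P ≤ 1) (m : ℕ) :
    Integrable (fun ω => (1 + |ξ ω| + |η ω| + |Z ω| + |V ω|) ^ m) P ∧
    ∫ ω, (1 + |ξ ω| + |η ω| + |Z ω| + |V ω|) ^ m ∂P ≤ 5 ^ m * (1 + 4 * cconst m) := by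
  have lξ := (hH.allLp hξ).abs
  have lη := (hH.allLp hη).abs
  have lZ := (hH.allLp hZ).abs
  have lV := (hH.allLp hV).abs
  have l1 := AllLp.const (P := P) 1
  have hi := (((((l1.add lξ).add lη).add lZ).add lV).pow m).integrable
  refine ⟨hi, ?_⟩
  have i1 := (lξ.pow m)
  have i2 := (lη.pow m)
  have i3 := (lZ.pow m)
  have i4 := (lV.pow m)
  calc _ ≤ ∫ ω, 5 ^ m * (1 + |ξ ω| ^ m + |η ω| ^ m + |Z ω| ^ m + |V ω| ^ m) ∂P := by
        refine integral_mono hi ((((l1.add i1).add i2).add i3).add i4 |>.const_mul _).integrable ?_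
        intro ω
        exact add_five_pow_le (abs_nonneg _) (abs_nonneg _) (abs_nonneg _) (abs_nonneg _) m
    _ = 5 ^ m * (1 + ∫ ω, |ξ ω| ^ m ∂P + ∫ ω, |η ω| ^ m ∂P + ∫ ω, |Z ω| ^ m ∂P +
          ∫ ω, |V ω| ^ m ∂P) := by
        rw [integral_const_mul, integral_add (((l1.add i1).add i2).add i3).integrable i4.integrable,
          integral_add ((l1.add i1).add i2).integrable i3.integrable,
          integral_add (l1.add i1).integrable i2.integrable,
          integral_add l1.integrable i1.integrable]
        simp
    _ ≤ _ := by
        have := hH.integral_abs_pow_le hξ h1 m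
        have := hH.integral_abs_pow_le hη h2 m
        have := hH.integral_abs_pow_le hZ h3 m
        have := hH.integral_abs_pow_le hV h4 m
        exact mul_le_mul_of_nonneg_left (by linarith) (by positivity)

/-- The normalized innovation of `V` with respect to `Z`. -/
def innov (ρ : ℝ) (Z V : Ω → ℝ) : Ω → ℝ := fun ω => (√(1 - ρ ^ 2))⁻¹ * (V ω - ρ * Z ω)

lemma innov_mem (hZ : Z ∈ H) (hV : V ∈ H) (ρ : ℝ) : innov ρ Z V ∈ H :=
  H.smul_mem _ (sub_smul_mem hV hZ ρ)

lemma ip_innov (hH : GaussSpace P H) (hu : u ∈ H) (hZ : Z ∈ H) (hV : V ∈ H) (ρ : ℝ) :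
    ∫ ω, u ω * innov ρ Z V ω ∂P =
      (∫ ω, u ω * V ω ∂P - ρ * ∫ ω, u ω * Z ω ∂P) / √(1 - ρ ^ 2) := by
  have h := hH.ip_sub_smul hV hZ hu ρ
  have e : ∀ ω, u ω * innov ρ Z V ω = (√(1 - ρ ^ 2))⁻¹ * (u ω * (V ω - ρ * Z ω)) := by
    intro ω; unfold innov; ring
  simp_rw [e]
  rw [integral_const_mul, h]
  have : ∫ ω, V ω * u ω ∂P = ∫ ω, u ω * V ω ∂P := by congr 1; ext ω; ring
  rw [this]; ring

lemma sqrt_bounds {ρ : ℝ} (hρ : |ρ| ≤ 1 / 2) :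
    1 / 2 ≤ √(1 - ρ ^ 2) ∧ √(1 - ρ ^ 2) ≤ 1 ∧ 1 - |ρ| ≤ √(1 - ρ ^ 2) ∧
      √(1 - ρ ^ 2) ^ 2 = 1 - ρ ^ 2 := by
  have h2 : ρ ^ 2 ≤ 1 / 4 := by rw [← sq_abs]; nlinarith [abs_nonneg ρ]
  have h3 : ρ ^ 2 = |ρ| ^ 2 := (sq_abs ρ).symm
  refine ⟨?_, ?_, ?_, Real.sq_sqrt (by linarith)⟩
  · apply Real.le_sqrt_of_sq_le; nlinarith
  · rw [Real.sqrt_le_one]; nlinarith [sq_nonneg ρ]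
  · apply Real.le_sqrt_of_sq_le; rw [h3]; nlinarith [abs_nonneg ρ]

lemma innov_norm (hH : GaussSpace P H) (hZ : Z ∈ H) (hV : V ∈ H)
    (h1 : ∫ ω, Z ω * Z ω ∂P = 1) (h2 : ∫ ω, V ω * V ω ∂P = 1) {ρ : ℝ}
    (h3 : ∫ ω, Z ω * V ω ∂P = ρ) (hρ : |ρ| ≤ 1 / 2) :
    ∫ ω, Z ω * innov ρ Z V ω ∂P = 0 ∧ ∫ ω, innov ρ Z V ω * innov ρ Z V ω ∂P = 1 := by
  obtain ⟨b1, b2, b3, b4⟩ := sqrt_bounds hρ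
  have k1 : ∫ ω, Z ω * innov ρ Z V ω ∂P = 0 := by
    rw [hH.ip_innov hZ hZ hV, h3, h1]; simp
  refine ⟨k1, ?_⟩
  rw [hH.ip_innov (innov_mem hZ hV ρ) hZ hV]
  have c1 : ∫ ω, innov ρ Z V ω * Z ω ∂P = 0 := by rw [← k1]; congr 1; ext ω; ring
  have c2 : ∫ ω, innov ρ Z V ω * V ω ∂P = (1 - ρ ^ 2) / √(1 - ρ ^ 2) := by
    have := hH.ip_innov hV hZ hV ρ
    have e : ∫ ω, V ω * Z ω ∂P = ρ := by rw [← h3]; congr 1; ext ω; ring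
    rw [h2, e] at this
    rw [show ρ ^ 2 = ρ * ρ by ring] at this ⊢
    rw [← this]; congr 1; ext ω; ring
  rw [c1, c2, mul_zero, sub_zero, div_div, ← pow_two, b4, div_self]
  rw [← b4]; positivity

/-- Pointwise cost of replacing `v = ρ z + √(1 - ρ²) w` by its innovation `w`. -/
lemma abs_mono_le {p : ℝ} (hp : 1 ≤ p) {ρ x y z v w S : ℝ} (hρ : |ρ| ≤ 1 / 2)
    (hv : v = ρ * z + √(1 - ρ ^ 2) * w) (hS : S = 1 + |x| + |y| + |z| + |w|)
    {i : ℕ} (hi : i ≤ 2) {m : ℕ} (hm : 4 + 2 * p ≤ m) (hc : 0 ≤ cconst p) :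
    |x ^ i * y ^ i * (fpow p z * (fpow p v - fpow p w))| ≤
      p * (1 + cconst p) * |ρ| * S ^ m := by
  obtain ⟨b1, b2, b3, b4⟩ := sqrt_bounds hρ
  have ax := abs_nonneg x
  have ay := abs_nonneg y
  have az := abs_nonneg z
  have aw := abs_nonneg w
  have aρ := abs_nonneg ρ
  have hS1 : 1 ≤ S := by linarith
  have hS0 : 0 < S := by linarith
  have f1 : |fpow p z| ≤ (1 + cconst p) * S ^ p := by
    unfold fpow
    have k1 : |z| ^ p ≤ S ^ p := Real.rpow_le_rpow az (by linarith) (by linarith)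
    have k2 : 1 ≤ S ^ p := Real.one_le_rpow hS1 (by linarith)
    have k3 : 0 ≤ |z| ^ p := by positivity
    rw [abs_le]; constructor <;> nlinarith
  have hvb : |v| ≤ |z| + |w| := by
    rw [hv]
    calc _ ≤ |ρ * z| + |√(1 - ρ ^ 2) * w| := abs_add_le _ _
      _ = |ρ| * |z| + √(1 - ρ ^ 2) * |w| := by
        rw [abs_mul, abs_mul, abs_of_nonneg (Real.sqrt_nonneg _)]
      _ ≤ _ := by nlinarith
  have hvw : |v - w| ≤ |ρ| * S := by
    have : v - w = ρ * z - (1 - √(1 - ρ ^ 2)) * w := by rw [hv]; ring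
    rw [this]
    calc _ ≤ |ρ * z| + |(1 - √(1 - ρ ^ 2)) * w| := abs_sub _ _
      _ = |ρ| * |z| + (1 - √(1 - ρ ^ 2)) * |w| := by
        rw [abs_mul, abs_mul, abs_of_nonneg (a := 1 - √(1 - ρ ^ 2)) (by linarith)]
      _ ≤ |ρ| * |z| + |ρ| * |w| := by gcongr; linarith
      _ ≤ _ := by nlinarith
  have f2 : |fpow p v - fpow p w| ≤ p * |ρ| * S ^ p := by
    have : fpow p v - fpow p w = |v| ^ p - |w| ^ p := by unfold fpow; ring
    rw [this]
    calc _ ≤ p * S ^ (p - 1) * |(|v| - |w|)| :=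
          abs_rpow_sub_le hp (abs_nonneg _) aw (by linarith) (by linarith)
      _ ≤ p * S ^ (p - 1) * (|ρ| * S) := by
          gcongr; exact (abs_abs_sub_abs_le _ _).trans hvw
      _ = p * |ρ| * S ^ p := by rw [Real.rpow_sub_one hS0.ne']; field_simp
  have f3 : ∀ t, |t| ≤ S → |t ^ i| ≤ S ^ 2 := by
    intro t ht
    rw [abs_pow]
    calc _ ≤ S ^ i := by gcongr
      _ ≤ S ^ 2 := pow_le_pow_right₀ hS1 hi
  rw [abs_mul, abs_mul, abs_mul]
  calc _ ≤ S ^ 2 * S ^ 2 * ((1 + cconst p) * S ^ p * (p * |ρ| * S ^ p)) := by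
        gcongr
        · exact f3 _ (by linarith)
        · exact f3 _ (by linarith)
    _ = p * (1 + cconst p) * |ρ| * S ^ (4 + 2 * p) := by
        rw [show (4 + 2 * p) = ((4 : ℕ) : ℝ) + (p + p) by push_cast; ring,
          Real.rpow_add hS0, Real.rpow_add hS0, Real.rpow_natCast]
        ring
    _ ≤ p * (1 + cconst p) * |ρ| * S ^ m := by
        rw [← Real.rpow_natCast S m]
        gcongr

/-- Replacing `V` by its innovation costs a factor of the correlation. -/
lemma exists_crude (hH : GaussSpace P H) (hp : 1 ≤ p) :
    ∃ C, 0 ≤ C ∧ ∀ (ξ η Z V : Ω → ℝ), ξ ∈ H → η ∈ H → Z ∈ H → V ∈ H → ∀ (s ρ : ℝ), 0 < s →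
      ∫ ω, ξ ω * ξ ω ∂P ≤ s ^ 2 → ∫ ω, η ω * η ω ∂P ≤ s ^ 2 →
      ∫ ω, Z ω * Z ω ∂P = 1 → ∫ ω, V ω * V ω ∂P = 1 → ∫ ω, Z ω * V ω ∂P = ρ → |ρ| ≤ 1 / 2 →
      ∀ i : ℕ, i ≤ 2 →
      |∫ ω, ξ ω ^ i * η ω ^ i * (fpow p (Z ω) * fpow p (V ω)) ∂P -
        ∫ ω, ξ ω ^ i * η ω ^ i * (fpow p (Z ω) * fpow p (innov ρ Z V ω)) ∂P| ≤
        C * s ^ (2 * i) * |ρ| := by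
  have hc : 0 ≤ cconst p := cconst_nonneg (by linarith)
  obtain ⟨m, hm⟩ := exists_nat_ge (4 + 2 * p)
  have hcm : 0 ≤ cconst m := cconst_nonneg (by have : (0 : ℝ) ≤ m := m.cast_nonneg; linarith)
  refine ⟨p * (1 + cconst p) * (5 ^ m * (1 + 4 * cconst m)), by positivity, ?_⟩
  intro ξ η Z V hξ hη hZ hV s ρ hs h1 h2 h3 h4 h5 hρ i hi
  obtain ⟨b1, b2, b3, b4⟩ := sqrt_bounds hρ
  obtain ⟨o1, o2⟩ := hH.innov_norm hZ hV h3 h4 h5 hρ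
  set W := innov ρ Z V with hW
  have hWH : W ∈ H := innov_mem hZ hV ρ
  set ξ' : Ω → ℝ := fun ω => s⁻¹ * ξ ω
  set η' : Ω → ℝ := fun ω => s⁻¹ * η ω
  have hξ' : ξ' ∈ H := H.smul_mem _ hξ
  have hη' : η' ∈ H := H.smul_mem _ hη
  have sc : ∀ u : Ω → ℝ, ∫ ω, u ω * u ω ∂P ≤ s ^ 2 →
      ∫ ω, (s⁻¹ * u ω) * (s⁻¹ * u ω) ∂P ≤ 1 := by
    intro u hu
    have : ∀ ω, (s⁻¹ * u ω) * (s⁻¹ * u ω) = (s ^ 2)⁻¹ * (u ω * u ω) := by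
      intro ω; field_simp
    simp_rw [this]
    rw [integral_const_mul, inv_mul_le_iff₀ (by positivity)]; linarith
  have lξ := hH.allLp hξ
  have lη := hH.allLp hη
  have hp0 : 0 < p := by linarith
  have lZ := allLp_fpow (hH.allLp hZ) hp0
  have lV := allLp_fpow (hH.allLp hV) hp0
  have lW := allLp_fpow (hH.allLp hWH) hp0
  rw [← integral_sub (((lξ.pow i).mul (lη.pow i)).mul (lZ.mul lV)).integrable
    (((lξ.pow i).mul (lη.pow i)).mul (lZ.mul lW)).integrable]
  obtain ⟨e1, e2⟩ := hH.integral_env_le hξ' hη' hZ hWH (sc _ h1) (sc _ h2) h3.le o2.le m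
  have pt : ∀ ω, |ξ ω ^ i * η ω ^ i * (fpow p (Z ω) * fpow p (V ω)) -
      ξ ω ^ i * η ω ^ i * (fpow p (Z ω) * fpow p (W ω))| ≤
      s ^ (2 * i) * (p * (1 + cconst p) * |ρ|) *
        (1 + |ξ' ω| + |η' ω| + |Z ω| + |W ω|) ^ m := by
    intro ω
    have hv : V ω = ρ * Z ω + √(1 - ρ ^ 2) * W ω := by
      rw [hW]; unfold innov
      have : √(1 - ρ ^ 2) ≠ 0 := by positivity
      field_simp; ring
    have := abs_mono_le (x := ξ' ω) (y := η' ω) hp hρ hv rfl hi hm hc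
    have e : ξ ω ^ i * η ω ^ i * (fpow p (Z ω) * fpow p (V ω)) -
      ξ ω ^ i * η ω ^ i * (fpow p (Z ω) * fpow p (W ω)) = s ^ (2 * i) *
        (ξ' ω ^ i * η' ω ^ i * (fpow p (Z ω) * (fpow p (V ω) - fpow p (W ω)))) := by
      simp only [ξ', η']
      rw [mul_pow, mul_pow, two_mul, pow_add, inv_pow]
      field_simp
    rw [e, abs_mul, abs_of_nonneg (by positivity), mul_assoc (s ^ (2 * i))]
    gcongr
  calc _ ≤ ∫ ω, |ξ ω ^ i * η ω ^ i * (fpow p (Z ω) * fpow p (V ω)) -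
      ξ ω ^ i * η ω ^ i * (fpow p (Z ω) * fpow p (W ω))| ∂P := abs_integral_le_integral_abs
    _ ≤ ∫ ω, s ^ (2 * i) * (p * (1 + cconst p) * |ρ|) *
        (1 + |ξ' ω| + |η' ω| + |Z ω| + |W ω|) ^ m ∂P := by
        refine integral_mono_of_nonneg (Eventually.of_forall fun ω => abs_nonneg _)
          (e1.const_mul _) (Eventually.of_forall pt)
    _ ≤ s ^ (2 * i) * (p * (1 + cconst p) * |ρ|) * (5 ^ m * (1 + 4 * cconst m)) := by
        rw [integral_const_mul]; gcongr
    _ = _ := by ring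

end GaussSpace

/-! ### Pair estimates -/

namespace GaussSpace

variable {P : Measure Ω} [IsProbabilityMeasure P] {H : Submodule ℝ (Ω → ℝ)}
  {u v ξ η Z V : Ω → ℝ} {p : ℝ}

/-- The algebra behind the second-order correlation bound: the conditional contribution
`c² ≈ 1/4` of each factor is cancelled by the centering constant `m/8`. -/
lemma quad_bound {m c c' e g ρ τ U : ℝ} (hρ : |ρ| ≤ 1 / 2)
    (hτ : 1 / 2 ≤ τ) (hτ2 : τ ^ 2 = 1 - ρ ^ 2)
    (hc : |c| ≤ 1) (hc' : |c'| ≤ 1) (he : |e| ≤ 1) (hg : |g| ≤ 1) (hU : |c ^ 2 - 1 / 4| ≤ U) :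
    |1 / 4 * (m ^ 2 * (c ^ 2 * ((g - ρ * e) / τ) ^ 2 +
        4 * c * ((c' - ρ * c) / τ) * e * ((g - ρ * e) / τ) + ((c' - ρ * c) / τ) ^ 2 * e ^ 2)) -
      m / 8 * (1 / 2 * (m * c ^ 2)) - m / 8 * (1 / 2 * (m * g ^ 2)) + (m / 8) ^ 2| ≤
      m ^ 2 * 100 * (|ρ| + |c'| + U) := by
  set d := (c' - ρ * c) / τ with hd
  set e' := (g - ρ * e) / τ with he'
  have hτ0 : 0 < τ := by linarith
  have aρ := abs_nonneg ρ
  have ac' := abs_nonneg c'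
  have aU : 0 ≤ U := (abs_nonneg _).trans hU
  have bd : |d| ≤ 2 * (|c'| + |ρ|) := by
    rw [hd, abs_div, abs_of_pos hτ0, div_le_iff₀ hτ0]
    have : |c' - ρ * c| ≤ |c'| + |ρ| := by
      refine (abs_sub _ _).trans ?_
      rw [abs_mul]; nlinarith
    nlinarith
  have bd3 : |d| ≤ 3 := by linarith
  have be : |e'| ≤ 3 := by
    rw [he', abs_div, abs_of_pos hτ0, div_le_iff₀ hτ0]
    have : |g - ρ * e| ≤ |g| + |ρ| := by
      refine (abs_sub _ _).trans ?_
      rw [abs_mul]; nlinarith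
    nlinarith
  have bg : |e' ^ 2 - g ^ 2| ≤ 16 * |ρ| := by
    have : e' ^ 2 - g ^ 2 = ρ * (ρ * g ^ 2 - 2 * g * e + ρ * e ^ 2) / τ ^ 2 := by
      have h : e' ^ 2 * τ ^ 2 = (g - ρ * e) ^ 2 := by rw [he']; field_simp
      rw [eq_div_iff (by positivity), sub_mul, h, hτ2]; ring
    rw [this, abs_div, abs_of_pos (by positivity : 0 < τ ^ 2), div_le_iff₀ (by positivity),
      abs_mul]
    have h1 : |ρ * g ^ 2 - 2 * g * e + ρ * e ^ 2| ≤ 4 := by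
      rw [abs_le] at *
      constructor <;> nlinarith [mul_self_nonneg (g - e), mul_self_nonneg (g + e)]
    have h2 : 1 / 4 ≤ τ ^ 2 := by nlinarith
    nlinarith
  have e1 : 1 / 4 * (m ^ 2 * (c ^ 2 * e' ^ 2 + 4 * c * d * e * e' + d ^ 2 * e ^ 2)) -
      m / 8 * (1 / 2 * (m * c ^ 2)) - m / 8 * (1 / 2 * (m * g ^ 2)) + (m / 8) ^ 2 =
      m ^ 2 / 4 * ((c ^ 2 - 1 / 4) * (g ^ 2 - 1 / 4) + c ^ 2 * (e' ^ 2 - g ^ 2) +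
        4 * (c * e) * e' * d + e ^ 2 * d * d) := by ring
  rw [e1, abs_mul, abs_of_nonneg (by positivity : 0 ≤ m ^ 2 / 4)]
  have sq : ∀ t : ℝ, |t| ≤ 1 → |t ^ 2| ≤ 1 := by
    intro t ht; rw [abs_pow]; exact pow_le_one₀ (abs_nonneg _) ht
  have t1 : |(c ^ 2 - 1 / 4) * (g ^ 2 - 1 / 4)| ≤ U * 1 := by
    rw [abs_mul]
    gcongr
    have h := sq g hg
    rw [abs_of_nonneg (sq_nonneg g)] at h
    rw [abs_le]; constructor <;> nlinarith [sq_nonneg g]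
  have t2 : |c ^ 2 * (e' ^ 2 - g ^ 2)| ≤ 1 * (16 * |ρ|) := by
    rw [abs_mul]; gcongr; exact sq c hc
  have t3 : |4 * (c * e) * e' * d| ≤ 4 * (1 * 1) * 3 * (2 * (|c'| + |ρ|)) := by
    rw [abs_mul, abs_mul, abs_mul, abs_mul, abs_of_pos (by norm_num : (0 : ℝ) < 4)]
    gcongr
  have t4 : |e ^ 2 * d * d| ≤ 1 * 3 * (2 * (|c'| + |ρ|)) := by
    rw [abs_mul, abs_mul]; gcongr; exact sq e he
  have := abs_add_le ((c ^ 2 - 1 / 4) * (g ^ 2 - 1 / 4) + c ^ 2 * (e' ^ 2 - g ^ 2) +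
        4 * (c * e) * e' * d) (e ^ 2 * d * d)
  have := abs_add_le ((c ^ 2 - 1 / 4) * (g ^ 2 - 1 / 4) + c ^ 2 * (e' ^ 2 - g ^ 2))
        (4 * (c * e) * e' * d)
  have := abs_add_le ((c ^ 2 - 1 / 4) * (g ^ 2 - 1 / 4)) (c ^ 2 * (e' ^ 2 - g ^ 2))
  have hm2 : 0 ≤ m ^ 2 := sq_nonneg m
  calc _ ≤ m ^ 2 / 4 * (400 * (|ρ| + |c'| + U)) := by
        gcongr
        linarith
    _ = _ := by ring

/-- Correlation bound for weights of degree at most one. After replacing `V` by its innovation,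
which is orthogonal to `Z`, the main term vanishes. -/
lemma exists_pair_low (hH : GaussSpace P H) (hp : 1 ≤ p) :
    ∃ C, 0 ≤ C ∧ ∀ (ξ η Z V : Ω → ℝ), ξ ∈ H → η ∈ H → Z ∈ H → V ∈ H → ∀ (s ρ : ℝ), 0 < s →
      ∫ ω, ξ ω * ξ ω ∂P ≤ s ^ 2 → ∫ ω, η ω * η ω ∂P ≤ s ^ 2 →
      ∫ ω, Z ω * Z ω ∂P = 1 → ∫ ω, V ω * V ω ∂P = 1 → ∫ ω, Z ω * V ω ∂P = ρ → |ρ| ≤ 1 / 2 →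
      ∀ i : ℕ, i ≤ 1 →
      |∫ ω, (ξ ω ^ i * fpow p (Z ω)) * (η ω ^ i * fpow p (V ω)) ∂P| ≤
        C * s ^ (2 * i) * |ρ| := by
  obtain ⟨C, hC, h⟩ := hH.exists_crude hp
  refine ⟨C, hC, ?_⟩
  intro ξ η Z V hξ hη hZ hV s ρ hs h1 h2 h3 h4 h5 hρ i hi
  have k := h ξ η Z V hξ hη hZ hV s ρ hs h1 h2 h3 h4 h5 hρ i (by omega)
  obtain ⟨o1, o2⟩ := hH.innov_norm hZ hV h3 h4 h5 hρ
  have hp0 : 0 < p := by linarith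
  have z : ∫ ω, ξ ω ^ i * η ω ^ i * (fpow p (Z ω) * fpow p (innov ρ Z V ω)) ∂P = 0 := by
    interval_cases i
    · simpa using hH.integral_fpow_mul_fpow hp0 hZ (innov_mem hZ hV ρ) h3 o1
    · simpa using hH.integral_mul_one hp0 hξ hη hZ (innov_mem hZ hV ρ) h3 o2 o1
  rw [z, sub_zero] at k
  refine le_trans (le_of_eq ?_) k
  congr 2; ext ω; ring

/-- Correlation bound for the centered variables with quadratic weights; `U` measures the distance
of the squared covariance `c²` from its limit `1/4`. -/
lemma exists_pair_two (hH : GaussSpace P H) (hp : 1 ≤ p) :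
    ∃ C, 0 ≤ C ∧ ∀ (ξ η Z V : Ω → ℝ), ξ ∈ H → η ∈ H → Z ∈ H → V ∈ H → ∀ (s ρ : ℝ), 1 ≤ s →
      ∫ ω, ξ ω * ξ ω ∂P ≤ s ^ 2 → ∫ ω, η ω * η ω ∂P ≤ s ^ 2 →
      ∫ ω, Z ω * Z ω ∂P = 1 → ∫ ω, V ω * V ω ∂P = 1 → ∫ ω, Z ω * V ω ∂P = ρ → |ρ| ≤ 1 / 2 →
      ∀ U c c' e g : ℝ, ∫ ω, ξ ω * Z ω ∂P = c → ∫ ω, ξ ω * V ω ∂P = c' →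
      ∫ ω, η ω * Z ω ∂P = e → ∫ ω, η ω * V ω ∂P = g →
      |c| ≤ 1 → |c'| ≤ 1 → |e| ≤ 1 → |g| ≤ 1 → |c ^ 2 - 1 / 4| ≤ U →
      |∫ ω, (ξ ω ^ 2 / 2 * fpow p (Z ω) - p * cconst p / 8) *
        (η ω ^ 2 / 2 * fpow p (V ω) - p * cconst p / 8) ∂P| ≤
        C * (s ^ 4 * |ρ| + |c'| + U) := by
  obtain ⟨C, hC, h⟩ := hH.exists_crude hp
  set m := p * cconst p with hm
  have hm0 : 0 ≤ m := mul_nonneg (by linarith) (cconst_nonneg (by linarith))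
  refine ⟨C + m ^ 2 * 100, by positivity, ?_⟩
  intro ξ η Z V hξ hη hZ hV s ρ hs h1 h2 h3 h4 h5 hρ U c c' e g hc hc' he hg bc bc' be bg hU
  have k := h ξ η Z V hξ hη hZ hV s ρ (by linarith) h1 h2 h3 h4 h5 hρ 2 le_rfl
  obtain ⟨o1, o2⟩ := hH.innov_norm hZ hV h3 h4 h5 hρ
  obtain ⟨b1, b2, b3, b4⟩ := sqrt_bounds hρ
  have hp0 : 0 < p := by linarith
  have aU : 0 ≤ U := (abs_nonneg _).trans hU
  have ac' := abs_nonneg c'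
  have aρ := abs_nonneg ρ
  have i1 := hH.integral_mul_mul_fpow hp0 hξ hξ hZ h3
  have i2 := hH.integral_mul_mul_fpow hp0 hη hη hV h4
  have d1 := hH.ip_innov hξ hZ hV ρ
  have d2 := hH.ip_innov hη hZ hV ρ
  rw [hc, hc'] at d1
  rw [he, hg] at d2
  rw [hc] at i1
  rw [hg] at i2
  have i3 := hH.integral_sq_mul_sq hp0 hξ hη hZ (innov_mem hZ hV ρ) h3 o2 o1 hc d1 he d2
  rw [i3] at k
  have q := quad_bound (m := m) hρ b1 b4 bc bc' be bg hU
  have lξ := hH.allLp hξ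
  have lη := hH.allLp hη
  have lZ := allLp_fpow (hH.allLp hZ) hp0
  have lV := allLp_fpow (hH.allLp hV) hp0
  set I := ∫ ω, ξ ω ^ 2 * η ω ^ 2 * (fpow p (Z ω) * fpow p (V ω)) ∂P with hI
  have e1 : ∫ ω, (ξ ω ^ 2 / 2 * fpow p (Z ω) - m / 8) *
        (η ω ^ 2 / 2 * fpow p (V ω) - m / 8) ∂P =
      1 / 4 * I - m / 8 * (1 / 2 * (m * c ^ 2)) - m / 8 * (1 / 2 * (m * g ^ 2)) + (m / 8) ^ 2 := by
    have : ∀ ω, (ξ ω ^ 2 / 2 * fpow p (Z ω) - m / 8) *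
        (η ω ^ 2 / 2 * fpow p (V ω) - m / 8) =
        1 / 4 * (ξ ω ^ 2 * η ω ^ 2 * (fpow p (Z ω) * fpow p (V ω))) -
        m / 16 * (ξ ω * ξ ω * fpow p (Z ω)) - m / 16 * (η ω * η ω * fpow p (V ω)) +
        (m / 8) ^ 2 := by intro ω; ring
    simp_rw [this]
    have l1 := (((lξ.pow 2).mul (lη.pow 2)).mul (lZ.mul lV)).const_mul (1 / 4)
    have l2 := ((lξ.mul lξ).mul lZ).const_mul (m / 16)
    have l3 := ((lη.mul lη).mul lV).const_mul (m / 16)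
    rw [integral_add ((l1.sub l2).sub l3).integrable (integrable_const _),
      integral_sub (l1.sub l2).integrable l3.integrable, integral_sub l1.integrable l2.integrable,
      integral_const_mul, integral_const_mul, integral_const_mul, i1, i2, ← hI]
    simp
    ring
  rw [e1]
  set Q := m ^ 2 * (c ^ 2 * ((g - ρ * e) / √(1 - ρ ^ 2)) ^ 2 +
        4 * c * ((c' - ρ * c) / √(1 - ρ ^ 2)) * e * ((g - ρ * e) / √(1 - ρ ^ 2)) +
        ((c' - ρ * c) / √(1 - ρ ^ 2)) ^ 2 * e ^ 2) with hQ
  have s4 : 1 ≤ s ^ 4 := one_le_pow₀ hs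
  have : 1 / 4 * I - m / 8 * (1 / 2 * (m * c ^ 2)) - m / 8 * (1 / 2 * (m * g ^ 2)) + (m / 8) ^ 2
      = 1 / 4 * (I - Q) + (1 / 4 * Q - m / 8 * (1 / 2 * (m * c ^ 2)) -
        m / 8 * (1 / 2 * (m * g ^ 2)) + (m / 8) ^ 2) := by ring
  rw [this]
  refine (abs_add_le _ _).trans ?_
  rw [abs_mul, abs_of_pos (by norm_num : (0 : ℝ) < 1 / 4)]
  have r1 : |ρ| ≤ s ^ 4 * |ρ| := le_mul_of_one_le_left aρ s4
  have r2 : m ^ 2 * 100 * (|ρ| + |c'| + U) ≤ m ^ 2 * 100 * (s ^ 4 * |ρ| + |c'| + U) := by gcongr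
  have r3 : C * s ^ (2 * 2) * |ρ| ≤ C * (s ^ 4 * |ρ| + |c'| + U) := by
    rw [mul_assoc]
    refine mul_le_mul_of_nonneg_left ?_ hC
    rw [show 2 * 2 = 4 by norm_num, add_assoc]
    exact le_add_of_nonneg_right (add_nonneg ac' aU)
  have r5 : 1 / 4 * |I - Q| ≤ C * (s ^ 4 * |ρ| + |c'| + U) := by
    have := abs_nonneg (I - Q)
    exact le_trans (by linarith) (k.trans r3)
  rw [add_mul]
  exact add_le_add r5 (q.trans r2)

/-- Second moment of a single weighted variable. -/
lemma exists_diag (hH : GaussSpace P H) (hp : 1 ≤ p) :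
    ∃ C, 0 ≤ C ∧ ∀ (ξ Z : Ω → ℝ), ξ ∈ H → Z ∈ H → ∀ (s κ : ℝ), 1 ≤ s → 0 ≤ κ → κ ≤ p * cconst p →
      ∫ ω, ξ ω * ξ ω ∂P ≤ s ^ 2 → ∫ ω, Z ω * Z ω ∂P = 1 → ∀ i : ℕ, i ≤ 2 → ∀ F : ℝ, 1 ≤ F →
      ∫ ω, (ξ ω ^ i / F * fpow p (Z ω) - κ) ^ 2 ∂P ≤ C * s ^ (2 * i) := by
  obtain ⟨m, hm⟩ := exists_nat_ge (4 + 2 * p)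
  set c := cconst p with hcdef
  have hc : 0 ≤ c := cconst_nonneg (by linarith)
  have hcm : 0 ≤ cconst m := cconst_nonneg (by have : (0 : ℝ) ≤ m := m.cast_nonneg; linarith)
  refine ⟨(1 + c + p * c) ^ 2 * (5 ^ m * (1 + 4 * cconst m)), by positivity, ?_⟩
  intro ξ Z hξ hZ s κ hs hκ hκ2 h1 h3 i hi F hF
  have hs0 : 0 < s := by linarith
  set ξ' : Ω → ℝ := fun ω => s⁻¹ * ξ ω
  have hξ' : ξ' ∈ H := H.smul_mem _ hξ
  have h1' : ∫ ω, ξ' ω * ξ' ω ∂P ≤ 1 := by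
    have : ∀ ω, ξ' ω * ξ' ω = (s ^ 2)⁻¹ * (ξ ω * ξ ω) := by
      intro ω; simp only [ξ']; field_simp
    simp_rw [this]
    rw [integral_const_mul, inv_mul_le_iff₀ (by positivity)]; linarith
  obtain ⟨e1, e2⟩ := hH.integral_env_le hξ' hξ' hZ hZ h1' h1' h3.le h3.le m
  calc _ ≤ ∫ ω, (1 + c + p * c) ^ 2 * s ^ (2 * i) *
        (1 + |ξ' ω| + |ξ' ω| + |Z ω| + |Z ω|) ^ m ∂P := by
        refine integral_mono_of_nonneg (Eventually.of_forall fun ω => sq_nonneg _)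
          (e1.const_mul _) (Eventually.of_forall fun ω => ?_)
        set S := 1 + |ξ' ω| + |ξ' ω| + |Z ω| + |Z ω| with hS
        have ax := abs_nonneg (ξ' ω)
        have az := abs_nonneg (Z ω)
        have hS1 : 1 ≤ S := by linarith
        have hS0 : 0 < S := by linarith
        have k2 : 1 ≤ S ^ p := Real.one_le_rpow hS1 (by linarith)
        have f1 : |fpow p (Z ω)| ≤ (1 + c) * S ^ p := by
          unfold fpow
          have k1 : |Z ω| ^ p ≤ S ^ p := Real.rpow_le_rpow az (by linarith) (by linarith)
          have k3 : 0 ≤ |Z ω| ^ p := by positivity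
          rw [abs_le]; constructor <;> nlinarith
        have f3 : |ξ ω ^ i / F| ≤ s ^ i * S ^ 2 := by
          have e : ξ ω = s * ξ' ω := by simp only [ξ']; field_simp
          rw [abs_div, abs_of_pos (by linarith : 0 < F), abs_pow, e, abs_mul, abs_of_pos hs0,
            mul_pow]
          refine (div_le_self (by positivity) hF).trans ?_
          gcongr
          calc _ ≤ S ^ i := by gcongr; linarith
            _ ≤ S ^ 2 := pow_le_pow_right₀ hS1 hi
        have s1 : 1 ≤ s ^ i := one_le_pow₀ hs
        have S2 : 1 ≤ S ^ 2 := one_le_pow₀ hS1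
        have f4 : |ξ ω ^ i / F * fpow p (Z ω) - κ| ≤ (1 + c + p * c) * s ^ i * (S ^ 2 * S ^ p) := by
          calc _ ≤ |ξ ω ^ i / F * fpow p (Z ω)| + |κ| := abs_sub _ _
            _ ≤ (s ^ i * S ^ 2) * ((1 + c) * S ^ p) + p * c * (s ^ i * (S ^ 2 * S ^ p)) := by
                rw [abs_mul]
                gcongr
                rw [abs_of_nonneg hκ]
                refine hκ2.trans (le_mul_of_one_le_right (by positivity) ?_)
                exact one_le_mul_of_one_le_of_one_le s1 (one_le_mul_of_one_le_of_one_le S2 k2)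
            _ = _ := by ring
        calc _ = |ξ ω ^ i / F * fpow p (Z ω) - κ| ^ 2 := (sq_abs _).symm
          _ ≤ ((1 + c + p * c) * s ^ i * (S ^ 2 * S ^ p)) ^ 2 := by gcongr
          _ = (1 + c + p * c) ^ 2 * s ^ (2 * i) * S ^ (4 + 2 * p) := by
              rw [show (4 + 2 * p) = ((4 : ℕ) : ℝ) + (p + p) by push_cast; ring,
                Real.rpow_add hS0, Real.rpow_add hS0, Real.rpow_natCast]
              ring
          _ ≤ (1 + c + p * c) ^ 2 * s ^ (2 * i) * S ^ m := by
              rw [← Real.rpow_natCast S m]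
              gcongr
    _ ≤ (1 + c + p * c) ^ 2 * s ^ (2 * i) * (5 ^ m * (1 + 4 * cconst m)) := by
        rw [integral_const_mul]; gcongr
    _ = _ := by ring

end GaussSpace

/-! ### Fractional Brownian increments -/

/-- The Gaussian space generated by `x`. -/
def gspan (x : ℝ → Ω → ℝ) : Submodule ℝ (Ω → ℝ) :=
  Submodule.span ℝ (x '' Set.Icc 0 1)

section fbm

variable {P : Measure Ω} [IsProbabilityMeasure P] {ν : ℝ} {x : ℝ → Ω → ℝ}

/-- Linear combinations of the values of a fractional Brownian motion are centered Gaussian. -/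
lemma gaussSpace_gspan (hx : IsFBM P ν x) : GaussSpace P (gspan x) := by
  constructor
  · intro u hu
    refine Submodule.span_induction (p := fun u _ => Measurable u) ?_ ?_ ?_ ?_ hu
    · rintro _ ⟨t, _, rfl⟩; exact hx.1 t
    · exact measurable_const
    · intro a b _ _ ha hb; exact ha.add hb
    · intro c a _ ha; exact ha.const_smul c
  · intro u hu
    obtain ⟨m, f, g, hg⟩ := (Submodule.mem_span_set' (R := ℝ) (s := x '' Set.Icc 0 1)).1 hu
    choose t ht using fun i => (g i).2
    have := hx.2.2 m t (fun j => (ht j).1) f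
    have e : (fun ω => ∑ j, f j * x (t j) ω) = u := by
      rw [← hg]; ext ω
      simp [Finset.sum_apply, (ht _).2]
    rw [e] at this
    exact ⟨_, this⟩

lemma mem_gspan {t : ℝ} (ht : t ∈ Set.Icc (0 : ℝ) 1) : x t ∈ gspan x :=
  Submodule.subset_span ⟨t, ht, rfl⟩

/-- The variance of an increment, read off from the law of `x t - x s`. -/
lemma IsFBM.integral_sq (hx : IsFBM P ν x) (hν : 0 < ν) {s t : ℝ} (hs : s ∈ Set.Icc (0 : ℝ) 1)
    (ht : t ∈ Set.Icc (0 : ℝ) 1) :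
    ∫ ω, (x t ω - x s ω) * (x t ω - x s ω) ∂P = |t - s| ^ (2 * ν) := by
  have hG := gaussSpace_gspan hx
  have hu : (fun ω => x t ω - x s ω) ∈ gspan x :=
    (gspan x).sub_mem (mem_gspan ht) (mem_gspan hs)
  have h := hx.2.2 2 ![s, t] (by simp [Fin.forall_fin_two, hs.1, hs.2, ht.1, ht.2]) ![-1, 1]
  have e : (fun ω => ∑ j, ![(-1 : ℝ), 1] j * x (![s, t] j) ω) = fun ω => x t ω - x s ω := by
    ext ω; simp [Fin.sum_univ_two]; ring
  have e2 : ∑ j, ∑ k, ![(-1 : ℝ), 1] j * ![(-1 : ℝ), 1] k * fbmCov ν (![s, t] j) (![s, t] k) =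
      |t - s| ^ (2 * ν) := by
    simp [Fin.sum_univ_two, fbmCov, Real.zero_rpow (by linarith : (2 * ν) ≠ 0)]
    rw [abs_sub_comm s t]; ring
  rw [e, e2, hG.map_eq hu] at h
  have hv := congrArg (fun μ => Var[id; μ]) h
  simp only [variance_id_gaussianReal] at hv
  have h0 : 0 ≤ ∫ ω, (x t ω - x s ω) * (x t ω - x s ω) ∂P :=
    integral_nonneg fun ω => mul_self_nonneg _
  rwa [Real.coe_toNNReal _ h0, Real.coe_toNNReal _ (by positivity)] at hv

/-- The rescaled increment `n^ν (x_{b/n} - x_{a/n})`. -/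
def inc (x : ℝ → Ω → ℝ) (ν : ℝ) (n a b : ℕ) : Ω → ℝ :=
  fun ω => (n : ℝ) ^ ν * (x ((b : ℝ) / n) ω - x ((a : ℝ) / n) ω)

lemma grid_mem {n a : ℕ} (ha : a ≤ n) : (a : ℝ) / n ∈ Set.Icc (0 : ℝ) 1 :=
  ⟨by positivity, div_le_one_of_le₀ (by exact_mod_cast ha) (by positivity)⟩

lemma inc_mem {n a b : ℕ} (ha : a ≤ n) (hb : b ≤ n) : inc x ν n a b ∈ gspan x :=
  (gspan x).smul_mem _ ((gspan x).sub_mem (mem_gspan (grid_mem hb)) (mem_gspan (grid_mem ha)))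

lemma IsFBM.integral_inc_sq (hx : IsFBM P ν x) (hν : 0 < ν) {n a b : ℕ} (hn : 0 < n)
    (ha : a ≤ n) (hb : b ≤ n) :
    ∫ ω, inc x ν n a b ω * inc x ν n a b ω ∂P = |(b : ℝ) - a| ^ (2 * ν) := by
  have hn' : (0 : ℝ) < n := by exact_mod_cast hn
  have e : ∀ ω, inc x ν n a b ω * inc x ν n a b ω = (n : ℝ) ^ (2 * ν) *
      ((x ((b : ℝ) / n) ω - x ((a : ℝ) / n) ω) * (x ((b : ℝ) / n) ω - x ((a : ℝ) / n) ω)) := by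
    intro ω; unfold inc; rw [two_mul, Real.rpow_add hn']; ring
  simp_rw [e]
  rw [integral_const_mul, hx.integral_sq hν (grid_mem ha) (grid_mem hb), ← sub_div, abs_div,
    abs_of_pos hn', Real.div_rpow (abs_nonneg _) hn'.le]
  have : (n : ℝ) ^ (2 * ν) ≠ 0 := by positivity
  field_simp

/-- The covariance of increments, by polarization. -/
lemma IsFBM.integral_inc_mul (hx : IsFBM P ν x) (hν : 0 < ν) {n a b c d : ℕ} (hn : 0 < n)
    (ha : a ≤ n) (hb : b ≤ n) (hc : c ≤ n) (hd : d ≤ n) :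
    ∫ ω, inc x ν n a b ω * inc x ν n c d ω ∂P =
      (|(d : ℝ) - a| ^ (2 * ν) + |(c : ℝ) - b| ^ (2 * ν) - |(d : ℝ) - b| ^ (2 * ν) -
        |(c : ℝ) - a| ^ (2 * ν)) / 2 := by
  have hG := gaussSpace_gspan hx
  have e : ∀ ω, inc x ν n a b ω * inc x ν n c d ω =
      1 / 2 * (inc x ν n a d ω * inc x ν n a d ω + inc x ν n b c ω * inc x ν n b c ω -
        inc x ν n b d ω * inc x ν n b d ω - inc x ν n a c ω * inc x ν n a c ω) := by
    intro ω; unfold inc; ring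
  simp_rw [e]
  have i : ∀ {a b : ℕ}, a ≤ n → b ≤ n →
      AllLp P (fun ω => inc x ν n a b ω * inc x ν n a b ω) := fun ha hb =>
    (hG.allLp (inc_mem ha hb)).mul (hG.allLp (inc_mem ha hb))
  rw [integral_const_mul, integral_sub (((i ha hd).add (i hb hc)).sub (i hb hd)).integrable (i ha hc).integrable,
    integral_sub ((i ha hd).add (i hb hc)).integrable (i hb hd).integrable,
    integral_add (i ha hd).integrable (i hb hc).integrable,
    hx.integral_inc_sq hν hn ha hd, hx.integral_inc_sq hν hn hb hc,
    hx.integral_inc_sq hν hn hb hd, hx.integral_inc_sq hν hn ha hc]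
  ring

end fbm

/-- The increments `(j+1)^α - j^α` of the power function. -/
def dpow (α : ℝ) (j : ℕ) : ℝ := ((j : ℝ) + 1) ^ α - (j : ℝ) ^ α

section dpow

variable {α : ℝ}

lemma dpow_nonneg (h0 : 0 < α) (j : ℕ) : 0 ≤ dpow α j :=
  sub_nonneg.2 (Real.rpow_le_rpow (by positivity) (by linarith) h0.le)

lemma dpow_succ_le (h0 : 0 < α) (h1 : α ≤ 1) (j : ℕ) : dpow α (j + 1) ≤ dpow α j := by
  have h := (Real.concaveOn_rpow h0.le h1).2
    (show (j : ℝ) ∈ Set.Ici 0 from Set.mem_Ici.2 (by positivity))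
    (show (j : ℝ) + 2 ∈ Set.Ici 0 from Set.mem_Ici.2 (by positivity))
    (show (0 : ℝ) ≤ 1 / 2 by norm_num) (show (0 : ℝ) ≤ 1 / 2 by norm_num) (by norm_num)
  simp only [smul_eq_mul] at h
  rw [show 1 / 2 * (j : ℝ) + 1 / 2 * ((j : ℝ) + 2) = (j : ℝ) + 1 by ring] at h
  unfold dpow
  push_cast
  rw [show (j : ℝ) + 1 + 1 = (j : ℝ) + 2 by ring]
  linarith

lemma dpow_anti (h0 : 0 < α) (h1 : α ≤ 1) : Antitone (dpow α) := antitone_nat_of_succ_le (dpow_succ_le h0 h1)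

lemma dpow_le_one (h0 : 0 < α) (h1 : α ≤ 1) (j : ℕ) : dpow α j ≤ 1 := by
  refine (dpow_anti h0 h1 (Nat.zero_le j)).trans ?_
  simp [dpow, Real.zero_rpow h0.ne']

lemma sum_dpow (h0 : 0 < α) (N : ℕ) : ∑ j ∈ Finset.range N, dpow α j = (N : ℝ) ^ α := by
  have := Finset.sum_range_sub (fun j : ℕ => (j : ℝ) ^ α) N
  simp only [Nat.cast_zero, Real.zero_rpow h0.ne', sub_zero] at this
  rw [← this]
  simp [dpow]

end dpow

section fbm2

variable {P : Measure Ω} [IsProbabilityMeasure P] {ν : ℝ} {x : ℝ → Ω → ℝ}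

lemma IsFBM.cov_self (hx : IsFBM P ν x) (hν : 0 < ν) {n k : ℕ} (hk : k < n) :
    ∫ ω, inc x ν n k (k + 1) ω * inc x ν n k (k + 1) ω ∂P = 1 := by
  rw [hx.integral_inc_sq hν (by omega) (by omega) (by omega)]
  simp

/-- Correlation of two unit increments. -/
lemma IsFBM.cov_unit (hx : IsFBM P ν x) (hν : 0 < ν) {n k j : ℕ} (hk : k + j + 1 < n) :
    ∫ ω, inc x ν n k (k + 1) ω * inc x ν n (k + j + 1) (k + j + 2) ω ∂P =
      -((dpow (2 * ν) j - dpow (2 * ν) (j + 1)) / 2) := by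
  rw [hx.integral_inc_mul hν (by omega) (by omega) (by omega) (by omega) (by omega)]
  unfold dpow
  push_cast
  rw [show (k : ℝ) + j + 2 - k = j + 1 + 1 by ring, show (k : ℝ) + j + 1 - (k + 1) = j by ring,
    show (k : ℝ) + j + 2 - (k + 1) = j + 1 by ring, show (k : ℝ) + j + 1 - k = j + 1 by ring,
    abs_of_nonneg (by positivity), abs_of_nonneg (by positivity), abs_of_nonneg (by positivity)]
  ring

/-- Covariance of a past increment with a later unit increment. -/
lemma IsFBM.cov_past (hx : IsFBM P ν x) (hν : 0 < ν) {n a i j : ℕ} (hk : a + i + j < n) :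
    ∫ ω, inc x ν n a (a + i) ω * inc x ν n (a + i + j) (a + i + j + 1) ω ∂P =
      (dpow (2 * ν) (i + j) - dpow (2 * ν) j) / 2 := by
  rw [hx.integral_inc_mul hν (by omega) (by omega) (by omega) (by omega) (by omega)]
  unfold dpow
  push_cast
  rw [show (a : ℝ) + i + j + 1 - a = i + j + 1 by ring,
    show (a : ℝ) + i + j - (a + i) = j by ring,
    show (a : ℝ) + i + j + 1 - (a + i) = j + 1 by ring,
    show (a : ℝ) + i + j - a = i + j by ring,
    abs_of_nonneg (by positivity), abs_of_nonneg (by positivity), abs_of_nonneg (by positivity),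
    abs_of_nonneg (by positivity)]
  ring

/-- Covariance of a long increment with a unit increment inside it. -/
lemma IsFBM.cov_inside (hx : IsFBM P ν x) (hν : 0 < ν) {n a i j : ℕ} (hk : a + i + j + 1 ≤ n) :
    ∫ ω, inc x ν n a (a + i + j + 1) ω * inc x ν n (a + i) (a + i + 1) ω ∂P =
      (dpow (2 * ν) i + dpow (2 * ν) j) / 2 := by
  rw [hx.integral_inc_mul hν (by omega) (by omega) (by omega) (by omega) (by omega)]
  unfold dpow
  push_cast
  rw [show (a : ℝ) + i + 1 - a = i + 1 by ring,
    show (a : ℝ) + i - (a + i + j + 1) = -(j + 1) by ring,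
    show (a : ℝ) + i + 1 - (a + i + j + 1) = -j by ring,
    show (a : ℝ) + i - a = i by ring, abs_neg, abs_neg,
    abs_of_nonneg (by positivity), abs_of_nonneg (by positivity), abs_of_nonneg (by positivity),
    abs_of_nonneg (by positivity)]
  ring

end fbm2

/-- A second-moment bound for sums with summable correlations. -/
lemma integral_sum_sq_le {P : Measure Ω} [IsProbabilityMeasure P] {A : ℕ → Ω → ℝ} {β : ℝ}
    {N : ℕ} (hA : ∀ k < N, AllLp P (A k)) (h1 : ∀ l < N, ∫ ω, A l ω ^ 2 ∂P ≤ β)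
    (h2 : ∀ l < N, ∑ k ∈ Finset.range l, |∫ ω, A k ω * A l ω ∂P| ≤ β) :
    AllLp P (fun ω => ∑ k ∈ Finset.range N, A k ω) ∧
    ∫ ω, (∑ k ∈ Finset.range N, A k ω) ^ 2 ∂P ≤ 3 * β * N := by
  induction N with
  | zero => simpa using AllLp.const (P := P) 0
  | succ N ih =>
    obtain ⟨i1, i2⟩ := ih (fun k hk => hA k (by omega)) (fun k hk => h1 k (by omega))
      (fun k hk => h2 k (by omega))
    have hN := hA N (by omega)
    refine ⟨by simpa only [Finset.sum_range_succ] using i1.add hN, ?_⟩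
    have e : ∀ ω, (∑ k ∈ Finset.range (N + 1), A k ω) ^ 2 =
        (∑ k ∈ Finset.range N, A k ω) ^ 2 + (∑ k ∈ Finset.range N, 2 * (A k ω * A N ω) +
          A N ω ^ 2) := by
      intro ω; rw [Finset.sum_range_succ, ← Finset.mul_sum, ← Finset.sum_mul]; ring
    have j : ∀ k ∈ Finset.range N, Integrable (fun ω => 2 * (A k ω * A N ω)) P := by
      intro k hk
      exact (((hA k (by have := Finset.mem_range.1 hk; omega)).mul hN).const_mul 2).integrable
    simp_rw [e]
    have j2 : Integrable (fun ω => ∑ k ∈ Finset.range N, 2 * (A k ω * A N ω) + A N ω ^ 2) P :=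
      (integrable_finsetSum _ j).add (hN.pow 2).integrable
    rw [integral_add (i1.pow 2).integrable j2,
      integral_add (integrable_finsetSum _ j) (hN.pow 2).integrable, integral_finsetSum _ j]
    simp_rw [integral_const_mul]
    rw [← Finset.mul_sum]
    have h3 : ∑ k ∈ Finset.range N, ∫ ω, A k ω * A N ω ∂P ≤ β :=
      (Finset.sum_le_sum fun k _ => le_abs_self _).trans (h2 N (by omega))
    have h4 := h1 N (by omega)
    push_cast
    linarith

/-! ### Block sums -/

section blocks

variable {P : Measure Ω} [IsProbabilityMeasure P] {ν : ℝ} {x : ℝ → Ω → ℝ} {p : ℝ}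

/-- The centering constant of the block sums: only quadratic weights have a nonzero mean. -/
def kap (p : ℝ) (i : ℕ) : ℝ := if i = 2 then p * cconst p / 8 else 0

/-- The summand of a block sum started at `a`. -/
def blk (x : ℝ → Ω → ℝ) (ν p : ℝ) (n a i k : ℕ) : Ω → ℝ := fun ω =>
  inc x ν n a (a + k) ω ^ i / (Nat.factorial i : ℝ) * fpow p (inc x ν n (a + k) (a + k + 1) ω)

lemma kap_nonneg (hp : 1 ≤ p) (i : ℕ) : 0 ≤ kap p i ∧ kap p i ≤ p * cconst p := by
  have : 0 ≤ p * cconst p := mul_nonneg (by linarith) (cconst_nonneg (by linarith))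
  unfold kap
  split_ifs <;> constructor <;> linarith

lemma allLp_blk (hx : IsFBM P ν x) (hp : 1 ≤ p) {n a i k : ℕ} (hk : a + k < n) :
    AllLp P (blk x ν p n a i k) := by
  have hG := gaussSpace_gspan hx
  have l1 := hG.allLp (inc_mem (x := x) (ν := ν) (n := n) (a := a) (b := a + k)
    (by omega) (by omega))
  have l2 := hG.allLp (inc_mem (x := x) (ν := ν) (n := n) (a := a + k) (b := a + k + 1)
    (by omega) (by omega))
  have := ((l1.pow i).const_mul ((Nat.factorial i : ℝ)⁻¹)).mul
    (allLp_fpow l2 (by linarith : 0 < p))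
  convert this using 2
  unfold blk; ring

lemma sum_dpow_diff {α : ℝ} (h0 : 0 < α) (l : ℕ) :
    ∑ k ∈ Finset.range l, (dpow α (l - 1 - k) - dpow α (l - 1 - k + 1)) / 2 ≤ 1 / 2 := by
  rw [Finset.sum_range_reflect (fun j => (dpow α j - dpow α (j + 1)) / 2) l, ← Finset.sum_div,
    Finset.sum_range_sub']
  have : dpow α 0 = 1 := by simp [dpow, Real.zero_rpow h0.ne']
  have := dpow_nonneg h0 l
  linarith

/-- After centering by `kap`, the block sums have a second moment that is linear in the block
length `N`, up to the natural size `N ^ (2 * i * ν)` of the squared weights. -/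
lemma exists_block (hx : IsFBM P ν x) (hν : 0 < ν) (hν2 : ν < 1 / 4) (hp : 1 ≤ p) :
    ∃ C, 0 ≤ C ∧ ∀ n a N i : ℕ, a + N ≤ n → i ≤ 2 →
      AllLp P (fun ω => ∑ k ∈ Finset.range N, (blk x ν p n a i k ω - kap p i)) ∧
      ∫ ω, (∑ k ∈ Finset.range N, (blk x ν p n a i k ω - kap p i)) ^ 2 ∂P ≤
        C * N * ((N : ℝ) ^ ν) ^ (2 * i) := by
  have hG := gaussSpace_gspan hx
  have α0 : 0 < 2 * ν := by linarith
  have α1 : 2 * ν ≤ 1 := by linarith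
  obtain ⟨C₀, hC₀, D0⟩ := hG.exists_diag hp
  obtain ⟨C₁, hC₁, D1⟩ := hG.exists_pair_low hp
  obtain ⟨C₂, hC₂, D2⟩ := hG.exists_pair_two hp
  refine ⟨3 * (C₀ + C₁ + 3 * C₂), by positivity, ?_⟩
  intro n a N i hN hi
  have hβ : 3 * (C₀ + C₁ + 3 * C₂) * N * ((N : ℝ) ^ ν) ^ (2 * i) =
      3 * ((C₀ + C₁ + 3 * C₂) * ((N : ℝ) ^ ν) ^ (2 * i)) * N := by ring
  rw [hβ]
  set s : ℝ := (N : ℝ) ^ ν with hs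
  have hs2 : s ^ 2 = (N : ℝ) ^ (2 * ν) := by
    rw [hs, ← Real.rpow_natCast, ← Real.rpow_mul (by positivity)]; congr 1; push_cast; ring
  have s1 : ∀ l < N, 1 ≤ s := fun l hl =>
    Real.one_le_rpow (by exact_mod_cast (by omega : 1 ≤ N)) hν.le
  have hs0 : 0 ≤ s := by positivity
  have lm : ∀ l, l ≤ N → (l : ℝ) ^ (2 * ν) ≤ s ^ 2 := by
    intro l hl; rw [hs2]
    exact Real.rpow_le_rpow (by positivity) (by exact_mod_cast hl) α0.le
  have vξ : ∀ l < N, ∫ ω, inc x ν n a (a + l) ω * inc x ν n a (a + l) ω ∂P ≤ s ^ 2 := by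
    intro l hl
    rw [hx.integral_inc_sq hν (by omega) (by omega) (by omega)]
    push_cast
    rw [add_sub_cancel_left, abs_of_nonneg (by positivity)]
    exact lm l hl.le
  have hmem : ∀ {a b : ℕ}, a ≤ n → b ≤ n → inc x ν n a b ∈ gspan x := fun ha hb => inc_mem ha hb
  have bρ : ∀ j, |-((dpow (2 * ν) j - dpow (2 * ν) (j + 1)) / 2)| =
      (dpow (2 * ν) j - dpow (2 * ν) (j + 1)) / 2 := by
    intro j
    have := dpow_succ_le α0 α1 j
    rw [abs_neg, abs_of_nonneg (by linarith)]
  have bρ2 : ∀ j, (dpow (2 * ν) j - dpow (2 * ν) (j + 1)) / 2 ≤ 1 / 2 := by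
    intro j
    have := dpow_le_one α0 α1 j
    have := dpow_nonneg α0 (j + 1)
    linarith
  apply integral_sum_sq_le
  · intro k hk
    exact (allLp_blk hx hp (by omega)).sub (AllLp.const _)
  · intro l hl
    have hF : (1 : ℝ) ≤ (Nat.factorial i : ℝ) := by
      exact_mod_cast Nat.one_le_iff_ne_zero.2 (Nat.factorial_ne_zero i)
    refine (D0 _ _ (hmem (by omega) (by omega)) (hmem (by omega) (by omega)) s (kap p i) (s1 l hl)
      (kap_nonneg hp i).1 (kap_nonneg hp i).2 (vξ l hl) (hx.cov_self hν (by omega)) i hi _ hF).trans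
      ?_
    gcongr
    linarith
  · intro l hl
    have hs1 := s1 l hl
    rcases Nat.lt_or_ge i 2 with hi1 | hi2
    · have hb : ∀ k ∈ Finset.range l, |∫ ω, (blk x ν p n a i k ω - kap p i) *
          (blk x ν p n a i l ω - kap p i) ∂P| ≤
          C₁ * s ^ (2 * i) * ((dpow (2 * ν) (l - 1 - k) - dpow (2 * ν) (l - 1 - k + 1)) / 2) := by
        intro k hk
        have hk := Finset.mem_range.1 hk
        obtain ⟨j, rfl⟩ : ∃ j, l = k + j + 1 := ⟨l - 1 - k, by omega⟩
        rw [show k + j + 1 - 1 - k = j by omega, ← bρ]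
        have hρ := hx.cov_unit hν (n := n) (k := a + k) (j := j) (by omega)
        rw [show a + k + j + 2 = a + (k + j + 1) + 1 by omega,
          show a + k + j + 1 = a + (k + j + 1) by omega] at hρ
        have hρ2 := bρ2 j
        rw [← bρ] at hρ2
        have := D1 (inc x ν n a (a + k)) (inc x ν n a (a + (k + j + 1))) (inc x ν n (a + k) (a + k + 1))
          (inc x ν n (a + (k + j + 1)) (a + (k + j + 1) + 1))
          (hmem (by omega) (by omega)) (hmem (by omega) (by omega)) (hmem (by omega) (by omega))
          (hmem (by omega) (by omega)) s _ (by linarith) (vξ _ (by omega)) (vξ _ (by omega))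
          (hx.cov_self hν (by omega)) (hx.cov_self hν (by omega)) hρ hρ2 i (by omega)
        refine le_trans (le_of_eq ?_) this
        have hk0 : kap p i = 0 := by unfold kap; rw [if_neg (by omega)]
        have hf1 : (Nat.factorial i : ℝ) = 1 := by interval_cases i <;> simp
        rw [hk0]
        unfold blk
        simp only [hf1, div_one, sub_zero]
      refine (Finset.sum_le_sum hb).trans ?_
      rw [← Finset.mul_sum]
      have h1 := sum_dpow_diff α0 l
      calc _ ≤ C₁ * s ^ (2 * i) * (1 / 2) := by gcongr
        _ ≤ C₁ * s ^ (2 * i) * 1 := by gcongr; norm_num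
        _ ≤ _ := by rw [mul_one]; gcongr; linarith
    · obtain rfl : i = 2 := by omega
      -- The covariance `c` of the weight with its own increment is `(dpow k - 1) / 2`, so `c²` is
      -- within `dpow k` of `1/4`.
      have hb : ∀ k ∈ Finset.range l, |∫ ω, (blk x ν p n a 2 k ω - kap p 2) *
          (blk x ν p n a 2 l ω - kap p 2) ∂P| ≤
          C₂ * (s ^ 4 * ((dpow (2 * ν) (l - 1 - k) - dpow (2 * ν) (l - 1 - k + 1)) / 2) +
            dpow (2 * ν) (l - 1 - k) + dpow (2 * ν) k) := by
        intro k hk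
        have hk := Finset.mem_range.1 hk
        obtain ⟨j, rfl⟩ : ∃ j, l = k + j + 1 := ⟨l - 1 - k, by omega⟩
        rw [show k + j + 1 - 1 - k = j by omega]
        have hρ := hx.cov_unit hν (n := n) (k := a + k) (j := j) (by omega)
        rw [show a + k + j + 2 = a + (k + j + 1) + 1 by omega,
          show a + k + j + 1 = a + (k + j + 1) by omega] at hρ
        have hρ2 := bρ2 j
        rw [← bρ] at hρ2
        have d0 : dpow (2 * ν) 0 = 1 := by simp [dpow, Real.zero_rpow α0.ne']
        have n1 := fun m => dpow_nonneg (α := 2 * ν) α0 m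
        have n2 := fun m => dpow_le_one α0 α1 m
        have hc := hx.cov_past hν (n := n) (a := a) (i := k) (j := 0) (by omega)
        have hc' := hx.cov_past hν (n := n) (a := a) (i := k) (j := j + 1) (by omega)
        have he := hx.cov_inside hν (n := n) (a := a) (i := k) (j := j) (by omega)
        have hg := hx.cov_past hν (n := n) (a := a) (i := k + j + 1) (j := 0) (by omega)
        rw [d0] at hc hg
        simp only [add_zero, ← add_assoc] at hc hc' he hg hρ
        have key := D2 (inc x ν n a (a + k)) (inc x ν n a (a + k + j + 1))
          (inc x ν n (a + k) (a + k + 1)) (inc x ν n (a + k + j + 1) (a + k + j + 1 + 1))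
          (hmem (by omega) (by omega)) (hmem (by omega) (by omega)) (hmem (by omega) (by omega))
          (hmem (by omega) (by omega)) s _ hs1 (vξ _ (by omega)) (by simpa only [← add_assoc] using vξ (k + j + 1) (by omega))
          (hx.cov_self hν (by omega)) (hx.cov_self hν (by omega)) hρ hρ2
          (dpow (2 * ν) k) _ _ _ _ hc hc' he hg
          (by rw [abs_le]; constructor <;> linarith [n1 (k), n2 (k)])
          (by rw [abs_le]; constructor <;>
                linarith [n1 (k + j + 1), n2 (k + j + 1), n1 (j + 1), n2 (j + 1)])
          (by rw [abs_le]; constructor <;> linarith [n1 k, n2 k, n1 j, n2 j])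
          (by rw [abs_le]; constructor <;>
                linarith [n1 (k + j + 1), n2 (k + j + 1)])
          (by
            have := n1 k; have := n2 k
            rw [abs_le]; constructor <;> nlinarith)
        have hk2 : kap p 2 = p * cconst p / 8 := by unfold kap; rw [if_pos rfl]
        have hf2 : (Nat.factorial 2 : ℝ) = 2 := by norm_num [Nat.factorial]
        rw [hk2]
        unfold blk
        simp only [hf2]
        simp only [← add_assoc] at key ⊢
        refine key.trans ?_
        rw [bρ]
        gcongr
        have := n1 (j + 1); have := n2 (j + 1)
        have q1 := dpow_succ_le α0 α1 j
        have q2 := dpow_anti α0 α1 (show j + 1 ≤ k + j + 1 by omega)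
        have := n1 (k + j + 1)
        rw [abs_le]; constructor <;> linarith
      -- The sums of `dpow` telescope to `l ^ (2 * ν) ≤ s ^ 2`, and those of its decrements are
      -- bounded.
      refine (Finset.sum_le_sum hb).trans ?_
      rw [← Finset.mul_sum, Finset.sum_add_distrib, Finset.sum_add_distrib, ← Finset.mul_sum,
        Finset.sum_range_reflect (fun j => dpow (2 * ν) j) l, sum_dpow α0]
      have h1 := sum_dpow_diff α0 l
      have h2 := lm l hl.le
      have h3 : s ^ 2 ≤ s ^ 4 := pow_le_pow_right₀ hs1 (by norm_num)
      have h4 : s ^ 4 * ∑ k ∈ Finset.range l,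
          (dpow (2 * ν) (l - 1 - k) - dpow (2 * ν) (l - 1 - k + 1)) / 2 ≤ s ^ 4 * 1 := by
        gcongr; linarith
      calc _ ≤ C₂ * (s ^ 4 * 1 + s ^ 4 + s ^ 4) := by
            gcongr
            · exact h2.trans h3
            · exact h2.trans h3
        _ = 3 * C₂ * s ^ (2 * 2) := by norm_num; ring
        _ ≤ _ := by gcongr; linarith

end blocks

/-! ### Discrete sewing -/

section sewing

variable {P : Measure Ω} [IsProbabilityMeasure P] {ν : ℝ} {x : ℝ → Ω → ℝ} {p : ℝ}
  {y : ℕ → ℝ → Ω → ℝ}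

/-- The centered power of the `k`-th normalized increment. -/
def fz (x : ℝ → Ω → ℝ) (ν p : ℝ) (n k : ℕ) (ω : Ω) : ℝ := fpow p (inc x ν n k (k + 1) ω)

/-- The remainder `r^{(k)}_{st}` of a controlled path with `ℓ = 3`. -/
def crem (x : ℝ → Ω → ℝ) (y : ℕ → ℝ → Ω → ℝ) (k : ℕ) (s t : ℝ) (ω : Ω) : ℝ :=
  y k t ω - y k s ω - ∑ j ∈ Finset.Icc 1 (3 - 1 - k), y (k + j) s ω * xlift x j s t ω

/-- The discrete integral of `x^i_{t_a ·}` against the centered powers over `N` steps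
started at `t_a`. -/
def FF (x : ℝ → Ω → ℝ) (ν p : ℝ) (n i a N : ℕ) (ω : Ω) : ℝ :=
  ∑ j ∈ Finset.range N, xlift x i ((a : ℝ) / n) (((a + j : ℕ) : ℝ) / n) ω * fz x ν p n (a + j) ω

/-- The discrete integral of the remainder `r^{(0)}_{t_a ·}` against the centered powers. -/
def RR (x : ℝ → Ω → ℝ) (y : ℕ → ℝ → Ω → ℝ) (ν p : ℝ) (n a N : ℕ) (ω : Ω) : ℝ :=
  ∑ j ∈ Finset.range N, crem x y 0 ((a : ℝ) / n) (((a + j : ℕ) : ℝ) / n) ω * fz x ν p n (a + j) ω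

lemma crem_zero (s t : ℝ) (ω : Ω) : crem x y 0 s t ω =
    y 0 t ω - y 0 s ω - y 1 s ω * (x t ω - x s ω) - y 2 s ω * ((x t ω - x s ω) ^ 2 / 2) := by
  have : Finset.Icc 1 2 = {1, 2} := by decide
  simp [crem, xlift, this, Nat.factorial]
  ring

lemma crem_one (s t : ℝ) (ω : Ω) : crem x y 1 s t ω =
    y 1 t ω - y 1 s ω - y 2 s ω * (x t ω - x s ω) := by
  simp [crem, xlift]

lemma crem_two (s t : ℝ) (ω : Ω) : crem x y 2 s t ω = y 2 t ω - y 2 s ω := by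
  simp [crem]

lemma xlift_zero' (s t : ℝ) (ω : Ω) : xlift x 0 s t ω = 1 := by simp [xlift]

lemma xlift_one' (s t : ℝ) (ω : Ω) : xlift x 1 s t ω = x t ω - x s ω := by simp [xlift]

lemma xlift_two' (s t : ℝ) (ω : Ω) : xlift x 2 s t ω = (x t ω - x s ω) ^ 2 / 2 := by
  simp [xlift, Nat.factorial]

/-- Chen-type relation for the remainder sums. -/
lemma RR_add (n a N M : ℕ) (ω : Ω) :
    RR x y ν p n a (N + M) ω = RR x y ν p n a N ω + RR x y ν p n (a + N) M ω +
      (crem x y 0 ((a : ℝ) / n) (((a + N : ℕ) : ℝ) / n) ω * FF x ν p n 0 (a + N) M ω +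
       crem x y 1 ((a : ℝ) / n) (((a + N : ℕ) : ℝ) / n) ω * FF x ν p n 1 (a + N) M ω +
       crem x y 2 ((a : ℝ) / n) (((a + N : ℕ) : ℝ) / n) ω * FF x ν p n 2 (a + N) M ω) := by
  unfold RR FF
  rw [Finset.sum_range_add, add_assoc]
  congr 1
  rw [Finset.mul_sum, Finset.mul_sum, Finset.mul_sum, ← Finset.sum_add_distrib,
    ← Finset.sum_add_distrib, ← Finset.sum_add_distrib]
  refine Finset.sum_congr rfl fun j _ => ?_
  rw [← add_assoc]
  simp only [crem_zero, crem_one, crem_two, xlift_zero', xlift_one', xlift_two']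
  ring

/-- Expansion of the weight around the starting point of the block. -/
lemma sum_expand (n a N : ℕ) (ω : Ω) :
    ∑ j ∈ Finset.range N, y 0 (((a + j : ℕ) : ℝ) / n) ω * fz x ν p n (a + j) ω =
      y 0 ((a : ℝ) / n) ω * FF x ν p n 0 a N ω + y 1 ((a : ℝ) / n) ω * FF x ν p n 1 a N ω +
      y 2 ((a : ℝ) / n) ω * FF x ν p n 2 a N ω + RR x y ν p n a N ω := by
  unfold RR FF
  rw [Finset.mul_sum, Finset.mul_sum, Finset.mul_sum, ← Finset.sum_add_distrib,
    ← Finset.sum_add_distrib, ← Finset.sum_add_distrib]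
  refine Finset.sum_congr rfl fun j _ => ?_
  simp only [crem_zero, xlift_zero', xlift_one', xlift_two']
  ring

lemma RR_zero (n a : ℕ) (ω : Ω) : RR x y ν p n a 0 ω = 0 := by simp [RR]

lemma RR_one (n a : ℕ) (ω : Ω) : RR x y ν p n a 1 ω = 0 := by simp [RR, crem_zero]

/-- Dyadic form of the discrete sewing lemma: a quantity that vanishes on blocks of length at most
one and is subadditive up to `L ^ θ` with `θ > 1` is itself of order `L ^ θ`. -/
lemma sewing {n : ℕ} {D : ℕ → ℕ → ℝ≥0∞} {B θ : ℝ} (hB : 0 ≤ B) (hθ : 1 < θ)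
    (h0 : ∀ a, D a 0 = 0) (h1 : ∀ a, D a 1 = 0)
    (hadd : ∀ a N M L : ℕ, a + N + M ≤ n → N ≤ L → M ≤ L → 1 ≤ L →
      D a (N + M) ≤ D a N + D (a + N) M + ENNReal.ofReal (B * (L : ℝ) ^ θ)) (j : ℕ) :
    ∀ a N : ℕ, a + N ≤ n → N ≤ 2 ^ j →
      D a N ≤ ENNReal.ofReal (B / (2 ^ θ - 2) * ((2 ^ j : ℕ) : ℝ) ^ θ) := by
  have h2 : (2 : ℝ) < 2 ^ θ := by
    conv_lhs => rw [← Real.rpow_one 2]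
    exact Real.rpow_lt_rpow_of_exponent_lt (by norm_num) hθ
  have hc : 0 ≤ B / (2 ^ θ - 2) := div_nonneg hB (by linarith)
  induction j with
  | zero =>
    intro a N _ hN
    have : N = 0 ∨ N = 1 := by simp at hN; omega
    rcases this with rfl | rfl
    · rw [h0]; exact zero_le
    · rw [h1]; exact zero_le
  | succ j ih =>
    intro a N ha hN
    rw [pow_succ] at hN
    have hN' : N / 2 + (N - N / 2) = N := by omega
    rw [← hN']
    refine (hadd a (N / 2) (N - N / 2) (2 ^ j) (by omega) (by omega) (by omega)
      Nat.one_le_two_pow).trans ?_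
    refine (add_le_add (add_le_add (ih _ _ (by omega) (by omega)) (ih _ _ (by omega) (by omega)))
      le_rfl).trans ?_
    rw [← ENNReal.ofReal_add (by positivity) (by positivity),
      ← ENNReal.ofReal_add (by positivity) (by positivity)]
    apply ENNReal.ofReal_le_ofReal
    rw [pow_succ, Nat.cast_mul, Real.mul_rpow (by positivity) (by positivity)]
    push_cast
    apply le_of_eq
    have : (2 : ℝ) ^ θ - 2 ≠ 0 := by linarith
    field_simp
    ring

lemma eLpNorm_two_le {f : Ω → ℝ} (hf : MemLp f 2 P) {B : ℝ} (hB : 0 ≤ B)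
    (h : ∫ ω, f ω ^ 2 ∂P ≤ B ^ 2) : eLpNorm f 2 P ≤ ENNReal.ofReal B := by
  rw [MemLp.eLpNorm_eq_integral_rpow_norm (by norm_num) (by norm_num) hf]
  apply ENNReal.ofReal_le_ofReal
  simp only [ENNReal.toReal_ofNat, Real.norm_eq_abs, Real.rpow_two, sq_abs]
  calc (∫ a, f a ^ 2 ∂P) ^ ((2 : ℝ)⁻¹) ≤ (B ^ 2) ^ ((2 : ℝ)⁻¹) :=
        Real.rpow_le_rpow (integral_nonneg fun _ => sq_nonneg _) h (by norm_num)
    _ = B := by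
        rw [← Real.rpow_natCast, ← Real.rpow_mul hB]; norm_num

lemma eLpNorm_mul_le {f g : Ω → ℝ} (hf : AEStronglyMeasurable f P)
    (hg : AEStronglyMeasurable g P) {A B : ℝ} (hA : 0 ≤ A)
    (h1 : eLpNorm f 2 P ≤ ENNReal.ofReal A) (h2 : eLpNorm g 2 P ≤ ENNReal.ofReal B) :
    eLpNorm (fun ω => f ω * g ω) 1 P ≤ ENNReal.ofReal (A * B) := by
  rw [ENNReal.ofReal_mul hA]
  refine le_trans ?_ (mul_le_mul' h1 h2)
  have := eLpNorm_smul_le_mul_eLpNorm (p := 2) (q := 2) (r := 1) (μ := P) (φ := f) (f := g) hg hf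
  exact this

lemma measurable_fz (hx : IsFBM P ν x) (n k : ℕ) : Measurable (fz x ν p n k) := by
  have := hx.1
  unfold fz inc
  exact (measurable_fpow p).comp (by fun_prop)

lemma measurable_xlift (hx : IsFBM P ν x) (i : ℕ) (s t : ℝ) : Measurable (xlift x i s t) := by
  have := hx.1
  unfold xlift
  fun_prop

lemma measurable_FF (hx : IsFBM P ν x) (n i a N : ℕ) : Measurable (FF x ν p n i a N) := by
  unfold FF
  have h1 := fun i s t => measurable_xlift hx i s t
  have h2 := fun n k => measurable_fz (p := p) hx n k
  fun_prop

lemma measurable_crem (hx : IsFBM P ν x) (hy : ∀ k, k ≤ 2 → ∀ t, Measurable (y k t))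
    {k : ℕ} (hk : k ≤ 2) (s t : ℝ) : Measurable (crem x y k s t) := by
  have h1 := fun i s t => measurable_xlift hx i s t
  unfold crem
  refine ((hy k hk t).sub (hy k hk s)).sub (Finset.measurable_fun_sum _ fun j hj => ?_)
  have := (Finset.mem_Icc.1 hj).2
  exact (hy _ (by omega) s).mul (h1 _ _ _)

lemma measurable_RR (hx : IsFBM P ν x) (hy : ∀ k, k ≤ 2 → ∀ t, Measurable (y k t))
    (n a N : ℕ) : Measurable (RR x y ν p n a N) := by
  unfold RR
  have h1 := fun s t => measurable_crem hx hy (show 0 ≤ 2 by norm_num) s t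
  have h2 := fun n k => measurable_fz (p := p) hx n k
  fun_prop

/-- The block bound expressed through `xlift`. -/
lemma exists_FF (hx : IsFBM P ν x) (hν : 0 < ν) (hν2 : ν < 1 / 4) (hp : 1 ≤ p) :
    ∃ C, 0 ≤ C ∧ ∀ n a N i L : ℕ, 1 ≤ n → a + N ≤ n → N ≤ L → i ≤ 2 →
      eLpNorm (fun ω => FF x ν p n i a N ω - (((n : ℝ) ^ ν)⁻¹) ^ i * (kap p i * N)) 2 P ≤
        ENNReal.ofReal (C * (√L * (((n : ℝ) ^ ν)⁻¹ * (L : ℝ) ^ ν) ^ i)) := by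
  obtain ⟨C, hC, h⟩ := exists_block hx hν hν2 hp
  refine ⟨√C, by positivity, ?_⟩
  intro n a N i L hn ha hL hi
  obtain ⟨h1, h2⟩ := h n a N i ha hi
  have hnν : (0 : ℝ) < (n : ℝ) ^ ν := Real.rpow_pos_of_pos (by exact_mod_cast hn) _
  have e : (fun ω => FF x ν p n i a N ω - (((n : ℝ) ^ ν)⁻¹) ^ i * (kap p i * N)) =
      fun ω => (((n : ℝ) ^ ν)⁻¹) ^ i *
        ∑ k ∈ Finset.range N, (blk x ν p n a i k ω - kap p i) := by
    funext ω
    rw [Finset.sum_sub_distrib, mul_sub, Finset.sum_const, Finset.card_range, nsmul_eq_mul,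
      mul_comm (N : ℝ)]
    congr 1
    unfold FF
    rw [Finset.mul_sum]
    refine Finset.sum_congr rfl fun j _ => ?_
    unfold blk xlift fz
    have : inc x ν n a (a + j) ω ^ i = ((n : ℝ) ^ ν) ^ i *
        (x (((a + j : ℕ) : ℝ) / n) ω - x ((a : ℝ) / n) ω) ^ i := by
      unfold inc; rw [mul_pow]
    rw [this]
    have h3 : (((n : ℝ) ^ ν)⁻¹) ^ i * ((n : ℝ) ^ ν) ^ i = 1 := by
      rw [← mul_pow, inv_mul_cancel₀ hnν.ne', one_pow]
    linear_combination (-(x (((a + j : ℕ) : ℝ) / n) ω - x ((a : ℝ) / n) ω) ^ i /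
      (Nat.factorial i : ℝ) * fpow p (inc x ν n (a + j) (a + j + 1) ω)) * h3
  rw [e]
  apply eLpNorm_two_le (h1.const_mul _).memLp_two (by positivity)
  simp only [mul_pow]
  rw [integral_const_mul, Real.sq_sqrt hC, Real.sq_sqrt (by positivity)]
  have hNL : (N : ℝ) ≤ L := by exact_mod_cast hL
  calc _ ≤ ((((n : ℝ) ^ ν)⁻¹) ^ i) ^ 2 * (C * L * ((L : ℝ) ^ ν) ^ (2 * i)) := by
        gcongr
        refine h2.trans ?_
        gcongr
    _ = _ := by ring

/-- Sewing estimate: the remainder sums are of lower order. -/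
lemma exists_RR (hx : IsFBM P ν x) (hν : 0 < ν) (hν2 : ν < 1 / 4) (hp : 1 ≤ p) {K : ℝ}
    (hK : 0 ≤ K) (hy : Controlled P ν 3 K (xlift x) y) :
    ∃ C, 0 ≤ C ∧ ∀ n a N j : ℕ, 1 ≤ n → a + N ≤ n → N ≤ 2 ^ j →
      eLpNorm (RR x y ν p n a N) 1 P ≤
        ENNReal.ofReal (C * ((((n : ℝ) ^ ν)⁻¹) ^ 3 * ((2 ^ j : ℕ) : ℝ) ^ (1 + ν))) := by
  obtain ⟨C, hC, hF⟩ := exists_FF hx hν hν2 hp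
  obtain ⟨hm, hcont, hy0, hr⟩ := hy
  have hm' : ∀ k, k ≤ 2 → ∀ t, Measurable (y k t) := fun k hk => hm k (by omega)
  have hmp : 0 ≤ p * cconst p := mul_nonneg (by linarith) (cconst_nonneg (by linarith))
  refine ⟨3 * (K * (C + p * cconst p)) / (2 ^ (1 + ν) - 2), ?_, ?_⟩
  · apply div_nonneg (by positivity)
    have : (2 : ℝ) ^ (1 : ℝ) ≤ 2 ^ (1 + ν) :=
      Real.rpow_le_rpow_of_exponent_le (by norm_num) (by linarith)
    rw [Real.rpow_one] at this
    linarith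
  intro n a N j hn ha hN
  set u : ℝ := ((n : ℝ) ^ ν)⁻¹ with hu
  have hn0 : (0 : ℝ) < n := by exact_mod_cast hn
  have hu0 : 0 ≤ u := by positivity
  have main := sewing (n := n) (D := fun a N => eLpNorm (RR x y ν p n a N) 1 P)
    (B := 3 * (K * (C + p * cconst p)) * u ^ 3) (θ := 1 + ν) (by positivity) (by linarith)
    (fun a => by
      have : RR x y ν p n a 0 = 0 := funext fun ω => RR_zero n a ω
      simp [this])
    (fun a => by
      have : RR x y ν p n a 1 = 0 := funext fun ω => RR_one n a ω
      simp [this])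
    (by
      intro a N M L h1 hNL hML hL
      have hL1 : (1 : ℝ) ≤ L := by exact_mod_cast hL
      have hNL' : (N : ℝ) ≤ L := by exact_mod_cast hNL
      have hML' : (M : ℝ) ≤ L := by exact_mod_cast hML
      set s : ℝ := (L : ℝ) ^ ν with hs
      have hs0 : 0 ≤ s := by positivity
      -- `s = L ^ ν`; this is where `ν < 1/4` enters
      have hs2 : s ^ 2 ≤ √L := by
        rw [hs, ← Real.rpow_natCast, ← Real.rpow_mul (by positivity), Real.sqrt_eq_rpow]
        apply Real.rpow_le_rpow_of_exponent_le hL1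
        push_cast; linarith
      have hLs : (L : ℝ) ^ (1 + ν) = L * s := by
        rw [Real.rpow_add (by linarith), Real.rpow_one]
      have hsq : √(L : ℝ) * √L = L := Real.mul_self_sqrt (by positivity)
      have hterm : ∀ i, i ≤ 2 → eLpNorm (fun ω =>
          crem x y i ((a : ℝ) / n) (((a + N : ℕ) : ℝ) / n) ω * FF x ν p n i (a + N) M ω) 1 P ≤
          ENNReal.ofReal (K * (C + p * cconst p) * u ^ 3 * (L : ℝ) ^ (1 + ν)) := by
        intro i hi
        have b1 : eLpNorm (crem x y i ((a : ℝ) / n) (((a + N : ℕ) : ℝ) / n)) 2 P ≤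
            ENNReal.ofReal (K * (u * s) ^ (3 - i)) := by
          refine (hr i (by omega) _ _ (by positivity) (by push_cast; gcongr; simp) ?_).trans ?_
          · rw [div_le_one hn0]; exact_mod_cast (by omega : a + N ≤ n)
          apply ENNReal.ofReal_le_ofReal
          gcongr
          have e0 : (((a + N : ℕ) : ℝ) / n) - (a : ℝ) / n = N / n := by
            push_cast; ring
          rw [e0, mul_comm _ ν, Real.rpow_mul (by positivity), Real.rpow_natCast,
            Real.div_rpow (by positivity) (by positivity), div_eq_inv_mul]
          exact pow_le_pow_left₀ (by positivity)
            (mul_le_mul_of_nonneg_left (Real.rpow_le_rpow (by positivity) hNL' hν.le) hu0) _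
        have b2 : eLpNorm (FF x ν p n i (a + N) M) 2 P ≤
            ENNReal.ofReal (C * (√L * (u * s) ^ i) + u ^ i * (kap p i * L)) := by
          have hk := (kap_nonneg hp i).1
          have e : FF x ν p n i (a + N) M = (fun ω => FF x ν p n i (a + N) M ω -
              u ^ i * (kap p i * M)) + fun _ => u ^ i * (kap p i * M) := by
            funext ω; simp
          rw [e, ENNReal.ofReal_add (by positivity) (by positivity)]
          refine (eLpNorm_add_le ((measurable_FF hx _ _ _ _).sub measurable_const).aestronglyMeasurable
            aestronglyMeasurable_const (by norm_num)).trans ?_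
          refine add_le_add (hF n (a + N) M i L hn h1 hML hi) ?_
          rw [eLpNorm_const _ (by norm_num) (IsProbabilityMeasure.ne_zero P)]
          simp only [measure_univ, ENNReal.one_rpow, mul_one]
          rw [Real.enorm_of_nonneg (by positivity)]
          apply ENNReal.ofReal_le_ofReal
          gcongr
        refine (eLpNorm_mul_le (measurable_crem hx hm' hi _ _).aestronglyMeasurable
          (measurable_FF hx _ _ _ _).aestronglyMeasurable (by positivity) b1 b2).trans ?_
        apply ENNReal.ofReal_le_ofReal
        have hk := kap_nonneg hp i
        have e1 : (u * s) ^ (3 - i) * (√L * (u * s) ^ i) = u ^ 3 * (√L * s ^ 2 * s) := by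
          interval_cases i <;> ring
        have e2 : (u * s) ^ (3 - i) * (u ^ i * (kap p i * L)) ≤
            u ^ 3 * (p * cconst p * (L * s)) := by
          interval_cases i
          · simp only [kap]; norm_num; positivity
          · simp only [kap]; norm_num; positivity
          · calc _ = u ^ 3 * (kap p 2 * (L * s)) := by ring
              _ ≤ _ := by gcongr; exact hk.2
        have e3 : √(L : ℝ) * s ^ 2 * s ≤ L * s := by
          calc √(L : ℝ) * s ^ 2 * s ≤ √(L : ℝ) * √L * s := by gcongr
            _ = _ := by rw [hsq]
        calc K * (u * s) ^ (3 - i) * (C * (√L * (u * s) ^ i) + u ^ i * (kap p i * L))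
            = K * (C * ((u * s) ^ (3 - i) * (√L * (u * s) ^ i)) +
                (u * s) ^ (3 - i) * (u ^ i * (kap p i * L))) := by ring
          _ ≤ K * (C * (u ^ 3 * (L * s)) + u ^ 3 * (p * cconst p * (L * s))) := by
              rw [e1]; gcongr
          _ = _ := by rw [hLs]; ring
      have mc := fun i (hi : i ≤ 2) => ((measurable_crem hx hm' hi ((a : ℝ) / n)
        (((a + N : ℕ) : ℝ) / n)).mul (measurable_FF (p := p) hx n i (a + N) M)).aestronglyMeasurable
          (μ := P)
      have mR := fun a N => (measurable_RR (p := p) hx hm' n a N).aestronglyMeasurable (μ := P)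
      have e : RR x y ν p n a (N + M) = (RR x y ν p n a N + RR x y ν p n (a + N) M) +
          (((fun ω => crem x y 0 ((a : ℝ) / n) (((a + N : ℕ) : ℝ) / n) ω * FF x ν p n 0 (a + N) M ω) +
          (fun ω => crem x y 1 ((a : ℝ) / n) (((a + N : ℕ) : ℝ) / n) ω * FF x ν p n 1 (a + N) M ω)) +
          (fun ω => crem x y 2 ((a : ℝ) / n) (((a + N : ℕ) : ℝ) / n) ω *
            FF x ν p n 2 (a + N) M ω)) := by
        funext ω; exact RR_add n a N M ω
      show eLpNorm (RR x y ν p n a (N + M)) 1 P ≤ _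
      rw [e]
      refine (eLpNorm_add_le ((mR _ _).add (mR _ _)) (((mc 0 (by norm_num)).add
        (mc 1 (by norm_num))).add (mc 2 le_rfl)) le_rfl).trans ?_
      refine add_le_add (eLpNorm_add_le (mR _ _) (mR _ _) le_rfl) ?_
      refine (eLpNorm_add_le ((mc 0 (by norm_num)).add (mc 1 (by norm_num))) (mc 2 le_rfl)
        le_rfl).trans ?_
      refine (add_le_add (eLpNorm_add_le (mc 0 (by norm_num)) (mc 1 (by norm_num)) le_rfl)
        le_rfl).trans ?_
      refine (add_le_add (add_le_add (hterm 0 (by norm_num)) (hterm 1 (by norm_num)))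
        (hterm 2 le_rfl)).trans ?_
      rw [← ENNReal.ofReal_add (by positivity) (by positivity),
        ← ENNReal.ofReal_add (by positivity) (by positivity)]
      apply ENNReal.ofReal_le_ofReal
      apply le_of_eq; ring)
    j a N ha hN
  refine main.trans (ENNReal.ofReal_le_ofReal (le_of_eq ?_))
  ring

end sewing

/-! ### Convergence for weights bounded in `L²` -/

section core

variable {P : Measure Ω} [IsProbabilityMeasure P] {ν : ℝ} {x : ℝ → Ω → ℝ} {p : ℝ}
  {y : ℕ → ℝ → Ω → ℝ}

/-- Error made on one block when the weight is replaced by its second-order mean effect. -/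
lemma exists_block_error (hx : IsFBM P ν x) (hν : 0 < ν) (hν2 : ν < 1 / 4) (hp : 1 ≤ p) {K : ℝ}
    (hK : 0 ≤ K) (hy : Controlled P ν 3 K (xlift x) y)
    (hb : ∀ k, k ≤ 2 → ∀ t ∈ Set.Icc (0 : ℝ) 1, eLpNorm (y k t) 2 P ≤ ENNReal.ofReal K) :
    ∃ C, 0 ≤ C ∧ ∀ n a N j : ℕ, 1 ≤ n → a + N ≤ n → N ≤ 2 ^ j → 2 ^ j ≤ n →
      eLpNorm (fun ω => ∑ i ∈ Finset.range N, (y 0 (((a + i : ℕ) : ℝ) / n) ω * fz x ν p n (a + i) ω -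
        (((n : ℝ) ^ ν)⁻¹) ^ 2 * (kap p 2 * y 2 ((a : ℝ) / n) ω))) 1 P ≤
        ENNReal.ofReal (C * (√((2 ^ j : ℕ) : ℝ) +
          (((n : ℝ) ^ ν)⁻¹) ^ 3 * ((2 ^ j : ℕ) : ℝ) ^ (1 + ν))) := by
  obtain ⟨C, hC, hF⟩ := exists_FF hx hν hν2 hp
  obtain ⟨C', hC', hR⟩ := exists_RR hx hν hν2 hp hK hy
  obtain ⟨hm, -, -, -⟩ := hy
  refine ⟨3 * (K * C) + C', by positivity, ?_⟩
  intro n a N j hn ha hN hj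
  set L : ℕ := 2 ^ j with hL
  set u : ℝ := ((n : ℝ) ^ ν)⁻¹ with hu
  have hn0 : (0 : ℝ) < n := by exact_mod_cast hn
  have hu0 : 0 ≤ u := by positivity
  have huL : u * (L : ℝ) ^ ν ≤ 1 := by
    rw [hu, inv_mul_le_iff₀ (by positivity), mul_one]
    exact Real.rpow_le_rpow (by positivity) (by exact_mod_cast hj) hν.le
  have ht : (a : ℝ) / n ∈ Set.Icc (0 : ℝ) 1 :=
    ⟨by positivity, by rw [div_le_one hn0]; exact_mod_cast (by omega : a ≤ n)⟩
  have mF := fun i => measurable_FF (p := p) hx n i a N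
  have hm' := fun i (hi : i ≤ 2) => hm i (by omega) ((a : ℝ) / n)
  have hterm : ∀ i, i ≤ 2 → eLpNorm (fun ω => y i ((a : ℝ) / n) ω *
      (FF x ν p n i a N ω - u ^ i * (kap p i * N))) 1 P ≤ ENNReal.ofReal (K * C * √(L : ℝ)) := by
    intro i hi
    refine (eLpNorm_mul_le (hm' i hi).aestronglyMeasurable
      ((mF i).sub measurable_const).aestronglyMeasurable hK (hb i hi _ ht)
      (hF n a N i L hn ha hN hi)).trans ?_
    apply ENNReal.ofReal_le_ofReal
    have : (u * (L : ℝ) ^ ν) ^ i ≤ 1 := pow_le_one₀ (by positivity) huL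
    calc K * (C * (√(L : ℝ) * (u * (L : ℝ) ^ ν) ^ i)) ≤ K * (C * (√(L : ℝ) * 1)) := by gcongr
      _ = _ := by ring
  have mt := fun i (hi : i ≤ 2) => ((hm' i hi).mul
    ((mF i).sub (measurable_const (a := u ^ i * (kap p i * N))))).aestronglyMeasurable (μ := P)
  have mR := (measurable_RR (p := p) hx (fun k hk => hm k (by omega)) n a N).aestronglyMeasurable
    (μ := P)
  have e : (fun ω => ∑ i ∈ Finset.range N, (y 0 (((a + i : ℕ) : ℝ) / n) ω * fz x ν p n (a + i) ω -
        u ^ 2 * (kap p 2 * y 2 ((a : ℝ) / n) ω))) =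
      (((fun ω => y 0 ((a : ℝ) / n) ω * (FF x ν p n 0 a N ω - u ^ 0 * (kap p 0 * N))) +
       (fun ω => y 1 ((a : ℝ) / n) ω * (FF x ν p n 1 a N ω - u ^ 1 * (kap p 1 * N)))) +
       (fun ω => y 2 ((a : ℝ) / n) ω * (FF x ν p n 2 a N ω - u ^ 2 * (kap p 2 * N)))) +
       RR x y ν p n a N := by
    funext ω
    rw [Finset.sum_sub_distrib, sum_expand]
    have k0 : kap p 0 = 0 := by simp [kap]
    have k1 : kap p 1 = 0 := by simp [kap]
    simp only [Pi.add_apply, k0, k1, Finset.sum_const, Finset.card_range, nsmul_eq_mul]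
    ring
  rw [e]
  refine (eLpNorm_add_le (((mt 0 (by norm_num)).add (mt 1 (by norm_num))).add (mt 2 le_rfl)) mR
    le_rfl).trans ?_
  refine (add_le_add (eLpNorm_add_le ((mt 0 (by norm_num)).add (mt 1 (by norm_num))) (mt 2 le_rfl)
    le_rfl) (hR n a N j hn ha hN)).trans ?_
  refine (add_le_add (add_le_add (eLpNorm_add_le (mt 0 (by norm_num)) (mt 1 (by norm_num)) le_rfl)
    (hterm 2 le_rfl)) le_rfl).trans ?_
  refine (add_le_add (add_le_add (add_le_add (hterm 0 (by norm_num)) (hterm 1 (by norm_num)))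
    le_rfl) le_rfl).trans ?_
  rw [← ENNReal.ofReal_add (by positivity) (by positivity),
    ← ENNReal.ofReal_add (by positivity) (by positivity),
    ← ENNReal.ofReal_add (by positivity) (by positivity)]
  apply ENNReal.ofReal_le_ofReal
  have h1 : 0 ≤ C' * √(L : ℝ) := by positivity
  have h2 : 0 ≤ 3 * (K * C) * (u ^ 3 * (L : ℝ) ^ (1 + ν)) := by positivity
  nlinarith

/-- Error of the blockwise approximation of the whole weighted sum. -/
lemma exists_total_error (hx : IsFBM P ν x) (hν : 0 < ν) (hν2 : ν < 1 / 4) (hp : 1 ≤ p) {K : ℝ}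
    (hK : 0 ≤ K) (hy : Controlled P ν 3 K (xlift x) y)
    (hb : ∀ k, k ≤ 2 → ∀ t ∈ Set.Icc (0 : ℝ) 1, eLpNorm (y k t) 2 P ≤ ENNReal.ofReal K) :
    ∃ C, 0 ≤ C ∧ ∀ n j : ℕ, 1 ≤ n → 2 ^ j ≤ n →
      eLpNorm (fun ω => (n : ℝ) ^ (2 * ν - 1) * ∑ k ∈ Finset.range n,
        (y 0 ((k : ℝ) / n) ω * fz x ν p n k ω -
        (((n : ℝ) ^ ν)⁻¹) ^ 2 * (kap p 2 * y 2 (((k / 2 ^ j * 2 ^ j : ℕ) : ℝ) / n) ω))) 1 P ≤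
        ENNReal.ofReal (C * ((n : ℝ) ^ (2 * ν) / √((2 ^ j : ℕ) : ℝ) +
          ((n : ℝ) ^ ν)⁻¹ * ((2 ^ j : ℕ) : ℝ) ^ ν)) := by
  obtain ⟨C, hC, hE⟩ := exists_block_error hx hν hν2 hp hK hy hb
  obtain ⟨hm, -, -, -⟩ := hy
  refine ⟨2 * C, by positivity, ?_⟩
  intro n j hn hj
  set L : ℕ := 2 ^ j with hL
  have hL0 : 0 < L := by positivity
  set u : ℝ := ((n : ℝ) ^ ν)⁻¹ with hu
  have hn0 : (0 : ℝ) < n := by exact_mod_cast hn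
  have hu0 : 0 < u := by positivity
  set E : ℝ := C * (√(L : ℝ) + u ^ 3 * (L : ℝ) ^ (1 + ν)) with hEdef
  have hE0 : 0 ≤ E := by positivity
  set G : ℕ → Ω → ℝ := fun m ω => ∑ k ∈ Finset.range m, (y 0 ((k : ℝ) / n) ω * fz x ν p n k ω -
        u ^ 2 * (kap p 2 * y 2 (((k / L * L : ℕ) : ℝ) / n) ω)) with hG
  have hsplit : ∀ q N, N ≤ L → G (q * L + N) = G (q * L) + fun ω => ∑ i ∈ Finset.range N,
      (y 0 (((q * L + i : ℕ) : ℝ) / n) ω * fz x ν p n (q * L + i) ω -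
        u ^ 2 * (kap p 2 * y 2 (((q * L : ℕ) : ℝ) / n) ω)) := by
    intro q N hN
    funext ω
    simp only [hG, Pi.add_apply]
    rw [Finset.sum_range_add]
    congr 1
    refine Finset.sum_congr rfl fun i hi => ?_
    have hi := Finset.mem_range.1 hi
    have : (q * L + i) / L = q := by
      rw [mul_comm, Nat.mul_add_div hL0, Nat.div_eq_of_lt (by omega), add_zero]
    rw [this]
  have mG : ∀ m, AEStronglyMeasurable (G m) P := by
    intro m
    refine (Finset.measurable_fun_sum _ fun k _ => ?_).aestronglyMeasurable
    exact ((hm 0 (by omega) _).mul (measurable_fz hx _ _)).sub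
      (((hm 2 (by omega) _).const_mul _).const_mul _)
  have hstep : ∀ q N, N ≤ L → q * L + N ≤ n →
      eLpNorm (G (q * L + N)) 1 P ≤ eLpNorm (G (q * L)) 1 P + ENNReal.ofReal E := by
    intro q N hN hq
    rw [hsplit q N hN]
    refine (eLpNorm_add_le (mG _) ?_ le_rfl).trans (add_le_add le_rfl (hE n (q * L) N j hn hq hN hj))
    refine (Finset.measurable_fun_sum _ fun k _ => ?_).aestronglyMeasurable
    exact ((hm 0 (by omega) _).mul (measurable_fz hx _ _)).sub
      (((hm 2 (by omega) _).const_mul _).const_mul _)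
  have hq : ∀ q, q * L ≤ n → eLpNorm (G (q * L)) 1 P ≤ ENNReal.ofReal (q * E) := by
    intro q
    induction q with
    | zero =>
      intro _
      have : G (0 * L) = 0 := by funext ω; simp [hG]
      rw [this]; simp
    | succ q ih =>
      intro h
      rw [Nat.succ_mul] at h ⊢
      refine (hstep q L le_rfl h).trans ((add_le_add (ih (by omega)) le_rfl).trans ?_)
      rw [← ENNReal.ofReal_add (by positivity) hE0]
      apply ENNReal.ofReal_le_ofReal
      push_cast; linarith
  have hdm : n / L * L + n % L = n := Nat.div_add_mod' n L
  have hGn : eLpNorm (G n) 1 P ≤ ENNReal.ofReal (((n / L : ℕ) : ℝ) * E + E) := by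
    have h1 := hstep (n / L) (n % L) (Nat.mod_lt _ hL0).le hdm.le
    rw [hdm] at h1
    refine h1.trans ((add_le_add (hq _ (by omega)) le_rfl).trans ?_)
    rw [← ENNReal.ofReal_add (by positivity) hE0]
  have e : (fun ω => (n : ℝ) ^ (2 * ν - 1) * G n ω) = (n : ℝ) ^ (2 * ν - 1) • G n := by
    funext ω; simp
  show eLpNorm (fun ω => (n : ℝ) ^ (2 * ν - 1) * G n ω) 1 P ≤ _
  rw [e, eLpNorm_const_smul, Real.enorm_of_nonneg (by positivity)]
  refine (mul_le_mul' le_rfl hGn).trans ?_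
  rw [← ENNReal.ofReal_mul (by positivity)]
  apply ENNReal.ofReal_le_ofReal
  have hLr : (0 : ℝ) < L := by exact_mod_cast hL0
  have h1 : ((n / L : ℕ) : ℝ) ≤ n / L := Nat.cast_div_le
  have h2 : (1 : ℝ) ≤ n / L := by rw [one_le_div hLr]; exact_mod_cast hj
  have h3 : (n : ℝ) ^ (2 * ν) = (u ^ 2)⁻¹ := by
    rw [hu, inv_pow, inv_inv, mul_comm, Real.rpow_mul hn0.le, Real.rpow_two]
  have h4 : (n : ℝ) ^ (2 * ν - 1) = (u ^ 2)⁻¹ / n := by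
    rw [Real.rpow_sub hn0, Real.rpow_one, h3]
  have h5 : (L : ℝ) ^ (1 + ν) = L * (L : ℝ) ^ ν := by rw [Real.rpow_add hLr, Real.rpow_one]
  have h6 : √(L : ℝ) * √(L : ℝ) = L := Real.mul_self_sqrt hLr.le
  have h7 : 0 < √(L : ℝ) := Real.sqrt_pos.2 hLr
  calc (n : ℝ) ^ (2 * ν - 1) * (((n / L : ℕ) : ℝ) * E + E)
      ≤ (n : ℝ) ^ (2 * ν - 1) * ((n / L : ℝ) * E + (n / L : ℝ) * E) := by
        gcongr
        calc E = 1 * E := (one_mul _).symm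
          _ ≤ _ := by gcongr
    _ = 2 * C * ((n : ℝ) ^ (2 * ν) / √(L : ℝ) + u * (L : ℝ) ^ ν) := by
        rw [h4, h3, hEdef, h5]
        have : √(L : ℝ) / L = 1 / √(L : ℝ) := by
          rw [div_eq_div_iff hLr.ne' h7.ne']; linarith
        calc _ = 2 * C * ((u ^ 2)⁻¹ * (n / n) * ((√(L : ℝ) / L) + u ^ 3 * (L / L) * (L : ℝ) ^ ν)) := by
              ring
          _ = _ := by
              rw [div_self hn0.ne', div_self hLr.ne', this]
              field_simp

/-- Riemann sums over a coarser partition converge to the integral. -/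
lemma tendsto_riemann {g : ℝ → ℝ} (hg : ContinuousOn g (Set.Icc 0 1)) (L : ℕ → ℕ)
    (hL : ∀ n, 0 < L n) (hL2 : Tendsto (fun n => (L n : ℝ) / n) atTop (nhds 0)) :
    Tendsto (fun n : ℕ => (n : ℝ)⁻¹ * ∑ k ∈ Finset.range n, g (((k / L n * L n : ℕ) : ℝ) / n)) atTop
      (nhds (∫ t in (0 : ℝ)..1, g t)) := by
  rw [Metric.tendsto_atTop']
  intro ε hε
  have hu := isCompact_Icc.uniformContinuousOn_of_continuous hg
  obtain ⟨δ, hδ, hu⟩ := Metric.uniformContinuousOn_iff.1 hu (ε / 2) (by linarith)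
  have h1 := hL2.eventually (gt_mem_nhds (show (0 : ℝ) < δ from hδ))
  obtain ⟨n₀, h1⟩ := eventually_atTop.1 h1
  refine ⟨n₀, fun n hn => ?_⟩
  have hn0 : (0 : ℝ) < n := by exact_mod_cast (by omega : 0 < n)
  have h1 := h1 n hn.le
  have hI : ∀ k, k < n → ∀ t ∈ Set.Icc ((k : ℝ) / n) (((k + 1 : ℕ) : ℝ) / n), t ∈ Set.Icc (0 : ℝ) 1 := by
    intro k hk t ht
    refine ⟨le_trans (by positivity) ht.1, ht.2.trans ?_⟩
    rw [div_le_one hn0]; exact_mod_cast hk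
  have hle : ∀ k : ℕ, (k : ℝ) / n ≤ ((k + 1 : ℕ) : ℝ) / n := by
    intro k; gcongr; omega
  have hgI : ∀ k < n, IntervalIntegrable g volume ((k : ℝ) / n) (((k + 1 : ℕ) : ℝ) / n) := by
    intro k hk
    apply ContinuousOn.intervalIntegrable
    rw [Set.uIcc_of_le (hle k)]
    exact hg.mono (hI k hk)
  have hsum := intervalIntegral.sum_integral_adjacent_intervals (f := g) (μ := volume)
    (a := fun k : ℕ => (k : ℝ) / n) (n := n) hgI
  simp only [Nat.cast_zero, zero_div, div_self hn0.ne'] at hsum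
  rw [← hsum, Real.dist_eq, Finset.mul_sum, ← Finset.sum_sub_distrib]
  have hk : ∀ k ∈ Finset.range n, |((n : ℝ)⁻¹ * g (((k / L n * L n : ℕ) : ℝ) / n) -
      ∫ t in ((k : ℝ) / n)..(((k + 1 : ℕ) : ℝ) / n), g t)| ≤ ε / 2 * (n : ℝ)⁻¹ := by
    intro k hk
    have hk := Finset.mem_range.1 hk
    have hlen : ((k + 1 : ℕ) : ℝ) / n - (k : ℝ) / n = (n : ℝ)⁻¹ := by
      push_cast; field_simp; ring
    have e : (n : ℝ)⁻¹ * g (((k / L n * L n : ℕ) : ℝ) / n) =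
        ∫ t in ((k : ℝ) / n)..(((k + 1 : ℕ) : ℝ) / n), g (((k / L n * L n : ℕ) : ℝ) / n) := by
      rw [intervalIntegral.integral_const, hlen, smul_eq_mul]
    rw [e, ← intervalIntegral.integral_sub (by simp) (hgI k hk)]
    have := intervalIntegral.norm_integral_le_of_norm_le_const (a := (k : ℝ) / n)
      (b := ((k + 1 : ℕ) : ℝ) / n) (C := ε / 2)
      (f := fun t => g (((k / L n * L n : ℕ) : ℝ) / n) - g t) ?_
    · rw [hlen, abs_of_nonneg (by positivity), Real.norm_eq_abs] at this
      exact this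
    · intro t ht
      rw [Set.uIoc_of_le (hle k)] at ht
      have hm : k / L n * L n ≤ k := Nat.div_mul_le_self _ _
      have hm2 : k + 1 ≤ k / L n * L n + L n := by
        have := Nat.lt_div_mul_add (a := k) (hL n)
        omega
      have hm' : (((k / L n * L n : ℕ) : ℝ)) / n ≤ (k : ℝ) / n := by gcongr
      have hm2' : ((k + 1 : ℕ) : ℝ) / n ≤ ((k / L n * L n : ℕ) : ℝ) / n + (L n : ℝ) / n := by
        rw [← add_div]; gcongr; exact_mod_cast hm2
      have hc : (((k / L n * L n : ℕ) : ℝ)) / n ∈ Set.Icc (0 : ℝ) 1 :=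
        ⟨by positivity, hm'.trans (hI k hk _ ⟨le_rfl, hle k⟩).2⟩
      have := hu _ hc t (hI k hk t ⟨ht.1.le, ht.2⟩) (by
        rw [dist_comm, Real.dist_eq, abs_of_nonneg (by linarith [ht.1])]
        linarith [ht.2])
      rw [Real.dist_eq] at this
      rw [Real.norm_eq_abs]; exact this.le
  calc _ ≤ ∑ k ∈ Finset.range n, ε / 2 * (n : ℝ)⁻¹ :=
        (Finset.abs_sum_le_sum_abs _ _).trans (Finset.sum_le_sum hk)
    _ = ε / 2 := by simp; field_simp
    _ < ε := by linarith

/-- An error that tends to zero in probability does not change a limit in probability. -/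
lemma tendstoInMeasure_zero_add {f g : ℕ → Ω → ℝ} {h : Ω → ℝ}
    (hf : TendstoInMeasure P f atTop (fun _ => (0 : ℝ))) (hg : TendstoInMeasure P g atTop h) :
    TendstoInMeasure P (fun n ω => f n ω + g n ω) atTop h := by
  intro ε hε
  have hε2 : 0 < ε / 2 := ENNReal.half_pos hε.ne'
  have t := (hf _ hε2).add (hg _ hε2)
  rw [add_zero] at t
  refine tendsto_of_tendsto_of_tendsto_of_le_of_le tendsto_const_nhds t (fun _ => zero_le)
    fun n => ?_
  refine (measure_mono ?_).trans (measure_union_le _ _)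
  intro ω hω
  by_contra hcon
  simp only [Set.mem_union, Set.mem_ofPred_eq, not_or, not_le] at hcon hω
  have h1 : edist (f n ω + g n ω) (h ω) ≤ edist (f n ω) 0 + edist (g n ω) (h ω) := by
    have := edist_add_add_le (f n ω) (g n ω) 0 (h ω)
    rwa [zero_add] at this
  have h2 := ENNReal.add_lt_add hcon.1 hcon.2
  rw [ENNReal.add_halves] at h2
  exact absurd (hω.trans h1) (not_le.2 h2)

/-- The convergence for weights which are bounded in `L²`. -/
lemma tendsto_of_bounded (hx : IsFBM P ν x) (hν : 0 < ν) (hν2 : ν < 1 / 4) (hp : 1 ≤ p) {K : ℝ}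
    (hK : 0 ≤ K) (hy : Controlled P ν 3 K (xlift x) y)
    (hb : ∀ k, k ≤ 2 → ∀ t ∈ Set.Icc (0 : ℝ) 1, eLpNorm (y k t) 2 P ≤ ENNReal.ofReal K) :
    TendstoInMeasure P
      (fun n : ℕ => fun ω => (n : ℝ) ^ (2 * ν - 1) *
        ∑ k ∈ Finset.range n, y 0 ((k : ℝ) / n) ω * fz x ν p n k ω) atTop
      (fun ω => kap p 2 * ∫ t in (0 : ℝ)..1, y 2 t ω) := by
  obtain ⟨C, hC, hE⟩ := exists_total_error hx hν hν2 hp hK hy hb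
  obtain ⟨hm, hcont, -, -⟩ := hy
  -- the blocks have length of the order `n ^ β` with `4 * ν < β < 1`
  set β : ℝ := (4 * ν + 1) / 2 with hβ
  have hβ1 : β < 1 := by rw [hβ]; linarith
  have hβ0 : 4 * ν < β := by rw [hβ]; linarith
  set J : ℕ → ℕ := fun n => Nat.log 2 ⌊(n : ℝ) ^ β⌋₊ with hJ
  have hfl : ∀ n : ℕ, 1 ≤ n → 1 ≤ ⌊(n : ℝ) ^ β⌋₊ := by
    intro n hn
    rw [Nat.one_le_floor_iff]
    exact Real.one_le_rpow (by exact_mod_cast hn) (by linarith)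
  have hup : ∀ n : ℕ, 1 ≤ n → ((2 ^ J n : ℕ) : ℝ) ≤ (n : ℝ) ^ β := by
    intro n hn
    have : 2 ^ J n ≤ ⌊(n : ℝ) ^ β⌋₊ := Nat.pow_log_le_self 2 (by have := hfl n hn; omega)
    exact le_trans (by exact_mod_cast this) (Nat.floor_le (by positivity))
  have hlo : ∀ n : ℕ, 1 ≤ n → (n : ℝ) ^ β ≤ 2 * ((2 ^ J n : ℕ) : ℝ) := by
    intro n hn
    have : ⌊(n : ℝ) ^ β⌋₊ < 2 ^ (J n + 1) := Nat.lt_pow_succ_log_self (by norm_num) _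
    have h2 := Nat.lt_floor_add_one ((n : ℝ) ^ β)
    have h3 : ((⌊(n : ℝ) ^ β⌋₊ + 1 : ℕ) : ℝ) ≤ ((2 ^ (J n + 1) : ℕ) : ℝ) := by exact_mod_cast this
    push_cast [pow_succ] at h3 ⊢
    linarith
  have hle : ∀ n : ℕ, 1 ≤ n → 2 ^ J n ≤ n := by
    intro n hn
    have h1 : (n : ℝ) ^ β ≤ n := by
      conv_rhs => rw [← Real.rpow_one (n : ℝ)]
      exact Real.rpow_le_rpow_of_exponent_le (by exact_mod_cast hn) hβ1.le
    exact_mod_cast (hup n hn).trans h1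
  have tneg : ∀ γ : ℝ, 0 < γ → Tendsto (fun n : ℕ => (n : ℝ) ^ (-γ)) atTop (nhds 0) := fun γ hγ =>
    (tendsto_rpow_neg_atTop hγ).comp tendsto_natCast_atTop_atTop
  have hLn : Tendsto (fun n => ((2 ^ J n : ℕ) : ℝ) / n) atTop (nhds 0) := by
    refine squeeze_zero' (Eventually.of_forall fun n => by positivity) ?_
      (tneg (1 - β) (by linarith))
    filter_upwards [eventually_ge_atTop 1] with n hn
    have hn0 : (0 : ℝ) < n := by exact_mod_cast hn
    rw [neg_sub, Real.rpow_sub hn0, Real.rpow_one]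
    gcongr
    exact hup n hn
  have herr : Tendsto (fun n : ℕ => C * ((n : ℝ) ^ (2 * ν) / √((2 ^ J n : ℕ) : ℝ) +
      ((n : ℝ) ^ ν)⁻¹ * ((2 ^ J n : ℕ) : ℝ) ^ ν)) atTop (nhds 0) := by
    have t1 := ((tneg (β / 2 - 2 * ν) (by linarith)).const_mul (√2)).add
      (tneg ((1 - β) * ν) (mul_pos (by linarith) hν))
    have t2 := t1.const_mul C
    simp only [mul_zero, add_zero] at t2
    refine squeeze_zero' (Eventually.of_forall fun n => by positivity) ?_ t2
    filter_upwards [eventually_ge_atTop 1] with n hn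
    have hn0 : (0 : ℝ) < n := by exact_mod_cast hn
    have hL0 : (0 : ℝ) < ((2 ^ J n : ℕ) : ℝ) := by positivity
    gcongr
    · rw [div_le_iff₀ (Real.sqrt_pos.2 hL0), neg_sub, Real.rpow_sub hn0]
      have h1 : (n : ℝ) ^ (β / 2) ≤ √2 * √((2 ^ J n : ℕ) : ℝ) := by
        rw [← Real.sqrt_mul (by norm_num), show β / 2 = β * (1 / 2) by ring, Real.rpow_mul hn0.le,
          ← Real.sqrt_eq_rpow]
        exact Real.sqrt_le_sqrt (hlo n hn)
      have h2 : 0 < (n : ℝ) ^ (β / 2) := by positivity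
      calc (n : ℝ) ^ (2 * ν) = (n : ℝ) ^ (2 * ν) / (n : ℝ) ^ (β / 2) * (n : ℝ) ^ (β / 2) := by
            field_simp
        _ ≤ (n : ℝ) ^ (2 * ν) / (n : ℝ) ^ (β / 2) * (√2 * √((2 ^ J n : ℕ) : ℝ)) := by gcongr
        _ = _ := by ring
    · calc ((n : ℝ) ^ ν)⁻¹ * ((2 ^ J n : ℕ) : ℝ) ^ ν ≤ ((n : ℝ) ^ ν)⁻¹ * ((n : ℝ) ^ β) ^ ν := by
            gcongr; exact hup n hn
        _ = _ := by
            rw [← Real.rpow_mul hn0.le, ← Real.rpow_neg hn0.le, ← Real.rpow_add hn0]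
            congr 1; ring
  have T1 : TendstoInMeasure P (fun n : ℕ => fun ω => (n : ℝ) ^ (2 * ν - 1) * ∑ k ∈ Finset.range n,
        (y 0 ((k : ℝ) / n) ω * fz x ν p n k ω -
        (((n : ℝ) ^ ν)⁻¹) ^ 2 * (kap p 2 * y 2 (((k / 2 ^ J n * 2 ^ J n : ℕ) : ℝ) / n) ω))) atTop
      (fun _ => (0 : ℝ)) := by
    refine tendstoInMeasure_of_tendsto_eLpNorm (p := 1) (by norm_num) ?_
      aestronglyMeasurable_const ?_
    · intro n
      refine ((Finset.measurable_fun_sum _ fun k _ => ?_).const_mul _).aestronglyMeasurable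
      exact ((hm 0 (by omega) _).mul (measurable_fz hx _ _)).sub
        (((hm 2 (by omega) _).const_mul _).const_mul _)
    · have t3 := (ENNReal.continuous_ofReal.tendsto 0).comp herr
      rw [ENNReal.ofReal_zero] at t3
      refine tendsto_of_tendsto_of_tendsto_of_le_of_le' tendsto_const_nhds t3
        (Eventually.of_forall fun _ => zero_le) ?_
      filter_upwards [eventually_ge_atTop 1] with n hn
      have := hE n (J n) hn (hle n hn)
      simpa only [Pi.sub_def, sub_zero, Function.comp_apply] using this
  have T2 : TendstoInMeasure P (fun n : ℕ => fun ω => kap p 2 * ((n : ℝ)⁻¹ *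
      ∑ k ∈ Finset.range n, y 2 (((k / 2 ^ J n * 2 ^ J n : ℕ) : ℝ) / n) ω)) atTop
      (fun ω => kap p 2 * ∫ t in (0 : ℝ)..1, y 2 t ω) := by
    refine tendstoInMeasure_of_tendsto_ae ?_ (Eventually.of_forall fun ω => ?_)
    · intro n
      exact (((Finset.measurable_fun_sum _ fun k _ => hm 2 (by omega) _).const_mul _).const_mul
        _).aestronglyMeasurable
    · exact (tendsto_riemann (hcont 2 (by omega) ω) (fun n => 2 ^ J n)
        (fun n => by positivity) hLn).const_mul _
  have T3 := tendstoInMeasure_zero_add T1 T2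
  refine T3.congr_left fun n => Eventually.of_forall fun ω => ?_
  rcases Nat.eq_zero_or_pos n with rfl | hn
  · simp
  have hn0 : (0 : ℝ) < n := by exact_mod_cast hn
  have h4 : (n : ℝ) ^ (2 * ν - 1) * (((n : ℝ) ^ ν)⁻¹) ^ 2 = (n : ℝ)⁻¹ := by
    rw [Real.rpow_sub hn0, Real.rpow_one, mul_comm 2 ν, Real.rpow_mul hn0.le, Real.rpow_two]
    field_simp
  show (n : ℝ) ^ (2 * ν - 1) * _ + kap p 2 * _ = _
  rw [Finset.sum_sub_distrib, mul_sub, ← Finset.mul_sum, ← Finset.mul_sum]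
  linear_combination (-(kap p 2 * ∑ k ∈ Finset.range n,
    y 2 (((k / 2 ^ J n * 2 ^ J n : ℕ) : ℝ) / n) ω)) * h4

end core

/-! ### Localization -/

section localization

variable {P : Measure Ω} [IsProbabilityMeasure P] {ν : ℝ} {x : ℝ → Ω → ℝ} {p : ℝ}
  {y : ℕ → ℝ → Ω → ℝ}

/-- The lifted process started at `0` is bounded in `L²`, uniformly in time. -/
lemma eLpNorm_xlift_le (hx : IsFBM P ν x) (hν : 0 < ν) (i : ℕ) {t : ℝ} (ht : t ∈ Set.Icc (0 : ℝ) 1) :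
    eLpNorm (xlift x i 0 t) 2 P ≤
      ENNReal.ofReal (√(∫ z, z ^ (2 * i) ∂(gaussianReal 0 1))) := by
  have hG := gaussSpace_gspan hx
  have h0 : (0 : ℝ) ∈ Set.Icc (0 : ℝ) 1 := ⟨le_rfl, zero_le_one⟩
  have hu : (fun ω => x t ω - x 0 ω) ∈ gspan x := (gspan x).sub_mem (mem_gspan ht) (mem_gspan h0)
  have hv := hx.integral_sq hν h0 ht
  have hmap := hG.map_eq hu
  rw [hv] at hmap
  set v : ℝ := |t - 0| ^ (2 * ν) with hvdef
  have hv0 : 0 ≤ v := by positivity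
  have hv1 : v ≤ 1 := by
    apply Real.rpow_le_one (abs_nonneg _) _ (by linarith)
    rw [sub_zero, abs_of_nonneg ht.1]; exact ht.2
  have hmap2 : P.map (fun ω => x t ω - x 0 ω) = (gaussianReal 0 1).map (fun z => √v * z) := by
    rw [hmap, gaussianReal_map_const_mul]
    congr 1
    · simp
    · ext; simp [Real.sq_sqrt hv0, hv0]
  have hl : AllLp P (xlift x i 0 t) := by
    have := ((hG.allLp hu).pow i).const_mul ((Nat.factorial i : ℝ)⁻¹)
    convert this using 2
    unfold xlift; ring
  have hpos : 0 ≤ ∫ z, z ^ (2 * i) ∂(gaussianReal 0 1) :=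
    integral_nonneg fun z => by rw [pow_mul]; positivity
  apply eLpNorm_two_le hl.memLp_two (by positivity)
  rw [Real.sq_sqrt hpos]
  have e1 : ∫ ω, xlift x i 0 t ω ^ 2 ∂P =
      ((Nat.factorial i : ℝ)⁻¹) ^ 2 * ∫ ω, (fun z : ℝ => z ^ (2 * i)) (x t ω - x 0 ω) ∂P := by
    rw [← integral_const_mul]
    congr 1; funext ω
    simp only [xlift, pow_mul']
    ring
  have e2 := integral_map (μ := P) (φ := fun ω => x t ω - x 0 ω) (hG.meas _ hu).aemeasurable
    (f := fun z : ℝ => z ^ (2 * i)) (by fun_prop)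
  rw [e1, ← e2, hmap2, integral_map (by fun_prop) (by fun_prop)]
  simp only [mul_pow]
  rw [integral_const_mul, ← mul_assoc]
  have hf : ((Nat.factorial i : ℝ)⁻¹) ^ 2 ≤ 1 := by
    apply pow_le_one₀ (by positivity)
    exact inv_le_one_of_one_le₀ (by exact_mod_cast Nat.one_le_iff_ne_zero.2 (Nat.factorial_ne_zero i))
  have hs : √v ^ (2 * i) ≤ 1 := pow_le_one₀ (by positivity) (Real.sqrt_le_one.2 hv1)
  calc _ ≤ (1 : ℝ) * ∫ z, z ^ (2 * i) ∂(gaussianReal 0 1) := by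
        gcongr
        exact mul_le_one₀ hf (by positivity) hs
    _ = _ := one_mul _

/-- Truncation of a controlled path on an event where `y'_0` and `y''_0` are bounded. -/
lemma exists_truncation (hx : IsFBM P ν x) (hν : 0 < ν) {K₀ : ℝ}
    (hy : Controlled P ν 3 K₀ (xlift x) y) {B : Set Ω} (hB : MeasurableSet B) {M : ℝ} (hM : 0 ≤ M)
    (hBM : ∀ ω ∈ B, |y 1 0 ω| ≤ M ∧ |y 2 0 ω| ≤ M) :
    ∃ K, 0 ≤ K ∧ Controlled P ν 3 K (xlift x) (fun k t => B.indicator (y k t)) ∧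
      ∀ k, k ≤ 2 → ∀ t ∈ Set.Icc (0 : ℝ) 1,
        eLpNorm (B.indicator (y k t)) 2 P ≤ ENNReal.ofReal K := by
  obtain ⟨hm, hcont, hy0, hr⟩ := hy
  set Q : ℕ → ℝ := fun i => √(∫ z, z ^ (2 * i) ∂(gaussianReal 0 1)) with hQ
  have hQ0 : ∀ i, 0 ≤ Q i := fun i => Real.sqrt_nonneg _
  have hKm : 0 ≤ max K₀ 0 := le_max_right _ _
  set K : ℝ := M + M * Q 1 + M * Q 2 + max K₀ 0 with hK
  have hMQ : 0 ≤ M + M * Q 1 + M * Q 2 := by have := hQ0 1; have := hQ0 2; positivity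
  refine ⟨K, by linarith, ⟨?_, ?_, ?_, ?_⟩, ?_⟩
  · intro k hk t
    exact (hm k hk t).indicator hB
  · intro k hk ω
    by_cases h : ω ∈ B
    · simpa only [Set.indicator_of_mem h] using hcont k hk ω
    · simp only [Set.indicator_of_notMem h]
      exact continuousOn_const
  · intro ω
    by_cases h : ω ∈ B <;> simp [h, hy0]
  · intro k hk s t hs hst ht
    have e : (fun ω => B.indicator (y k t) ω - B.indicator (y k s) ω -
        ∑ j ∈ Finset.Icc 1 (3 - 1 - k), B.indicator (y (k + j) s) ω * xlift x j s t ω) =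
        B.indicator (fun ω => y k t ω - y k s ω -
          ∑ j ∈ Finset.Icc 1 (3 - 1 - k), y (k + j) s ω * xlift x j s t ω) := by
      funext ω
      by_cases h : ω ∈ B <;> simp [h]
    rw [e]
    refine (eLpNorm_indicator_le _).trans ((hr k hk s t hs hst ht).trans ?_)
    apply ENNReal.ofReal_le_ofReal
    have : 0 ≤ t - s := by linarith
    gcongr
    linarith [le_max_left K₀ 0]
  · intro k hk t ht
    have hr' : eLpNorm (crem x y k 0 t) 2 P ≤ ENNReal.ofReal (max K₀ 0) := by
      refine (hr k hk 0 t le_rfl ht.1 ht.2).trans (ENNReal.ofReal_le_ofReal ?_)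
      have h1 : (t - 0) ^ (((3 - k : ℕ) : ℝ) * ν) ≤ 1 :=
        Real.rpow_le_one (by linarith [ht.1]) (by linarith [ht.2]) (by positivity)
      have h2 : 0 ≤ (t - 0) ^ (((3 - k : ℕ) : ℝ) * ν) := Real.rpow_nonneg (by linarith [ht.1]) _
      calc K₀ * (t - 0) ^ (((3 - k : ℕ) : ℝ) * ν) ≤ max K₀ 0 * (t - 0) ^ (((3 - k : ℕ) : ℝ) * ν) := by
            gcongr; exact le_max_left _ _
        _ ≤ max K₀ 0 * 1 := by gcongr
        _ = _ := mul_one _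
    have mx := fun i => (measurable_xlift hx i 0 t).norm
    have mr := (measurable_crem hx (fun k hk => hm k (by omega)) hk 0 t).norm
    have hle : ∀ ω, ‖B.indicator (y k t) ω‖ ≤
        ((((fun _ => M) + fun ω => M * ‖xlift x 1 0 t ω‖) + fun ω => M * ‖xlift x 2 0 t ω‖) +
          fun ω => ‖crem x y k 0 t ω‖ : Ω → ℝ) ω := by
      intro ω
      simp only [Pi.add_apply, Real.norm_eq_abs]
      have a1 := mul_nonneg hM (abs_nonneg (xlift x 1 0 t ω))
      have a2 := mul_nonneg hM (abs_nonneg (xlift x 2 0 t ω))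
      by_cases h : ω ∈ B
      · rw [Set.indicator_of_mem h]
        obtain ⟨b1, b2⟩ := hBM ω h
        have c : ∀ z w : ℝ, |z| ≤ M → |z * w| ≤ M * |w| := fun z w hz => by
          rw [abs_mul]; gcongr
        have tri : ∀ a b c d : ℝ, |a + b + c + d| ≤ |a| + |b| + |c| + |d| := fun a b c d =>
          (abs_add_le _ _).trans (add_le_add ((abs_add_le _ _).trans
            (add_le_add (abs_add_le _ _) le_rfl)) le_rfl)
        interval_cases k
        · have e : y 0 t ω = 0 + y 1 0 ω * xlift x 1 0 t ω + y 2 0 ω * xlift x 2 0 t ω +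
              crem x y 0 0 t ω := by
            rw [crem_zero, xlift_one', xlift_two', hy0]; ring
          rw [e]
          refine (tri _ _ _ _).trans ?_
          gcongr
          · simpa using hM
          · exact c _ _ b1
          · exact c _ _ b2
        · have e : y 1 t ω = y 1 0 ω + y 2 0 ω * xlift x 1 0 t ω + 0 + crem x y 1 0 t ω := by
            rw [crem_one, xlift_one']; ring
          rw [e]
          refine (tri _ _ _ _).trans ?_
          gcongr
          · exact c _ _ b2
          · simpa using a2
        · have e : y 2 t ω = y 2 0 ω + 0 + 0 + crem x y 2 0 t ω := by
            rw [crem_two]; ring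
          rw [e]
          refine (tri _ _ _ _).trans ?_
          gcongr
          · simpa using a1
          · simpa using a2
      · rw [Set.indicator_of_notMem h, abs_zero]
        have := abs_nonneg (crem x y k 0 t ω)
        linarith
    refine (eLpNorm_mono_real hle).trans ?_
    have q : ∀ i, eLpNorm (fun ω => M * ‖xlift x i 0 t ω‖) 2 P ≤ ENNReal.ofReal (M * Q i) := by
      intro i
      have e : (fun ω => M * ‖xlift x i 0 t ω‖) = M • fun ω => ‖xlift x i 0 t ω‖ := by
        funext ω; simp
      rw [e, eLpNorm_const_smul, eLpNorm_norm, Real.enorm_of_nonneg hM, ENNReal.ofReal_mul hM]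
      exact mul_le_mul' le_rfl (eLpNorm_xlift_le hx hν i ht)
    have q0 : eLpNorm (fun _ : Ω => M) 2 P ≤ ENNReal.ofReal M := by
      rw [eLpNorm_const _ (by norm_num) (IsProbabilityMeasure.ne_zero P)]
      simp [Real.enorm_of_nonneg hM]
    have m0 : AEStronglyMeasurable (fun _ : Ω => M) P := aestronglyMeasurable_const
    have m1 := fun i => ((mx i).const_mul M).aestronglyMeasurable (μ := P)
    refine (eLpNorm_add_le ((m0.add (m1 1)).add (m1 2)) mr.aestronglyMeasurable (by norm_num)).trans ?_
    rw [eLpNorm_norm, hK, ENNReal.ofReal_add hMQ hKm]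
    refine add_le_add ?_ hr'
    refine (eLpNorm_add_le (m0.add (m1 1)) (m1 2) (by norm_num)).trans ?_
    have p1 := mul_nonneg hM (hQ0 1)
    have p2 := mul_nonneg hM (hQ0 2)
    rw [ENNReal.ofReal_add (by positivity) p2, ENNReal.ofReal_add hM p1]
    refine add_le_add ((eLpNorm_add_le m0 (m1 1) (by norm_num)).trans (add_le_add q0 (q 1))) (q 2)

/-- Convergence in measure may be checked on an increasing family of events of probability
tending to one. -/
lemma tendstoInMeasure_of_localization {f : ℕ → Ω → ℝ} {g : Ω → ℝ} {B : ℕ → Set Ω}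
    (hB : ∀ M, MeasurableSet (B M)) (hmono : Monotone B) (hU : ⋃ M, B M = Set.univ)
    {f' : ℕ → ℕ → Ω → ℝ} {g' : ℕ → Ω → ℝ}
    (h : ∀ M, TendstoInMeasure P (f' M) atTop (g' M))
    (hf : ∀ M, ∀ ω ∈ B M, ∀ n, f' M n ω = f n ω) (hg : ∀ M, ∀ ω ∈ B M, g' M ω = g ω) :
    TendstoInMeasure P f atTop g := by
  have hc : Tendsto (fun M => P (B M)ᶜ) atTop (nhds 0) := by
    have := tendsto_measure_iInter_atTop (μ := P) (s := fun M => (B M)ᶜ)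
      (fun M => (hB M).compl.nullMeasurableSet)
      (fun a b hab => Set.compl_subset_compl.2 (hmono hab)) ⟨0, measure_ne_top _ _⟩
    rw [← Set.compl_iUnion, hU, Set.compl_univ, measure_empty] at this
    exact this
  intro ε hε
  rw [ENNReal.tendsto_atTop_zero]
  intro δ hδ
  have hδ2 : 0 < δ / 2 := ENNReal.half_pos hδ.ne'
  obtain ⟨M, hM⟩ := (ENNReal.tendsto_atTop_zero.1 hc) _ hδ2
  obtain ⟨n₀, hn⟩ := (ENNReal.tendsto_atTop_zero.1 (h M ε hε)) _ hδ2
  refine ⟨n₀, fun n hn' => ?_⟩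
  have hsub : {ω | ε ≤ edist (f n ω) (g ω)} ⊆
      (B M)ᶜ ∪ {ω | ε ≤ edist (f' M n ω) (g' M ω)} := by
    intro ω hω
    by_cases hb : ω ∈ B M
    · right
      show ε ≤ edist (f' M n ω) (g' M ω)
      rw [hf M ω hb n, hg M ω hb]
      exact hω
    · left; exact hb
  calc _ ≤ P (B M)ᶜ + P {ω | ε ≤ edist (f' M n ω) (g' M ω)} :=
        (measure_mono hsub).trans (measure_union_le _ _)
    _ ≤ δ / 2 + δ / 2 := add_le_add (hM M le_rfl) (hn n hn')
    _ = δ := ENNReal.add_halves δ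

end localization

/-- **Weighted power variation, rough regime** (Theorem 4.16 (iii)): for fBm with
`ν ∈ (0, 1/4)`, a controlled weight `(y,y',y'')` (with `α = 1-2ν`, `ℓ = 3`) and
`p ≥ 4`, `n^{2ν-1} ∑_k y_{t_k}(|n^ν δx_{t_k t_{k+1}}|^p - c_p)` converges in
probability to `(p c_p / 8) ∫₀¹ y''_t dt`. -/
theorem weighted_power_variation_rough
    {Ω : Type*} [MeasurableSpace Ω] (P : Measure Ω) [IsProbabilityMeasure P]
    (ν : ℝ) (hν : 0 < ν) (hν2 : ν < 1 / 4)
    (x : ℝ → Ω → ℝ) (hx : IsFBM P ν x)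
    (K₀ : ℝ) (y : ℕ → ℝ → Ω → ℝ) (hy : Controlled P ν 3 K₀ (xlift x) y)
    (p : ℝ) (hp : 4 ≤ p) :
    TendstoInMeasure P
      (fun n : ℕ => fun ω => (n : ℝ) ^ (2 * ν - 1) *
        ∑ k ∈ Finset.range n, y 0 ((k : ℝ) / n) ω *
          (|(n : ℝ) ^ ν * (x (((k : ℝ) + 1) / n) ω - x ((k : ℝ) / n) ω)| ^ p - cconst p))
      atTop
      (fun ω => p * cconst p / 8 * ∫ t in (0 : ℝ)..1, y 2 t ω) := by
  have hp1 : 1 ≤ p := by linarith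
  set B : ℕ → Set Ω := fun M => {ω | |y 1 0 ω| ≤ M} ∩ {ω | |y 2 0 ω| ≤ M} with hB
  have hBm : ∀ M, MeasurableSet (B M) := fun M =>
    (measurableSet_le (hy.1 1 (by norm_num) 0).abs measurable_const).inter
      (measurableSet_le (hy.1 2 (by norm_num) 0).abs measurable_const)
  choose K hK hc hb using fun M : ℕ => exists_truncation hx hν hy (hBm M) (Nat.cast_nonneg M)
    (fun ω hω => hω)
  refine tendstoInMeasure_of_localization hBm ?_ ?_
    (fun M => tendsto_of_bounded hx hν hν2 hp1 (hK M) (hc M) (hb M)) ?_ ?_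
  · intro a b hab ω hω
    have : (a : ℝ) ≤ b := by exact_mod_cast hab
    exact ⟨le_trans hω.1 this, le_trans hω.2 this⟩
  · refine Set.eq_univ_of_forall fun ω => Set.mem_iUnion.2 ?_
    obtain ⟨M, hM⟩ := exists_nat_ge (max |y 1 0 ω| |y 2 0 ω|)
    exact ⟨M, (le_max_left _ _).trans hM, (le_max_right _ _).trans hM⟩
  · intro M ω hω n
    simp only [Set.indicator_of_mem hω, fz, fpow, inc, Nat.cast_add, Nat.cast_one]
  · intro M ω hω
    simp only [Set.indicator_of_mem hω, kap, if_true]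

end
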